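/- arXiv:2603.22098 — 2 statements merged into one kernel-verified Lean document; each statement's English description precedes it below -/
import Mathlib

section
/- For every deterministic online strip-packing algorithm for L-shapes and every integer n ≥ 2, there exists a sequence of n pairwise distinct L-shapes from the family 𝓛^n that can be packed offline with pairwise disjoint interiors into the unit square [0,1]² (so the optimal strip width is at most 1), yet the width of the strip packing produced by the algorithm on this sequence is at least (n/log₂(n+1) − 2)/2. Consequently, the asymptotic competitive ratio of every online algorithm for strip packing of L-shapes is Ω(n/log n). -/
/-- An L-shape, given by its four parameters: arm lengths `lx, ly` and widths `wx, wy`. -/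
structure LShape where
  lx : ℝ
  wx : ℝ
  ly : ℝ
  wy : ℝ

/-- The parameter constraints of an L-shape: `0 ≤ wx ≤ lx ≤ 1` and `0 ≤ wy ≤ ly ≤ 1`. -/
def LShape.IsValid (L : LShape) : Prop :=
  0 ≤ L.wx ∧ L.wx ≤ L.lx ∧ L.lx ≤ 1 ∧ 0 ≤ L.wy ∧ L.wy ≤ L.ly ∧ L.ly ≤ 1

/-- The point set `([0,lx]×[0,wy]) ∪ ([0,wx]×[0,ly])` of an L-shape (reference point at the
origin). -/
def LShape.toSet (L : LShape) : Set (ℝ × ℝ) :=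
  Set.Icc ((0, 0) : ℝ × ℝ) (L.lx, L.wy) ∪ Set.Icc ((0, 0) : ℝ × ℝ) (L.wx, L.ly)

/-- Translate a set in the plane by a vector. -/
def planeTranslate (v : ℝ × ℝ) (S : Set (ℝ × ℝ)) : Set (ℝ × ℝ) := (· + v) '' S

/-- The unit bin `[0,1]²`. -/
def unitBin : Set (ℝ × ℝ) := Set.Icc ((0, 0) : ℝ × ℝ) (1, 1)

/-- The family `𝓛^k`: the L-shape `L_i` has `ℓx = 1/2 + 1/(2k)`, `wx = 1/(2k)`,
`ℓy = 1 − 2^(−i−1)`, `wy = 2^(−i−1)`. -/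
noncomputable def Lfam (k i : ℕ) : LShape :=
  ⟨1 / 2 + 1 / (2 * k), 1 / (2 * k), 1 - 1 / 2 ^ (i + 1), 1 / 2 ^ (i + 1)⟩

/-- The half-strip `[0,∞) × [0,1]`. -/
def strip : Set (ℝ × ℝ) := {p : ℝ × ℝ | 0 ≤ p.1 ∧ p.2 ∈ Set.Icc (0 : ℝ) 1}

/-- The translation chosen by the online strip-packing algorithm `A` for the `i`-th item of
`l` (depending only on the first `i+1` items). -/
def stripPlaceOf (A : List LShape → ℝ × ℝ) (l : List LShape) (i : Fin l.length) : ℝ × ℝ :=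
  A (l.take (i.1 + 1))

/-- The placements produced by `A` on `l` lie in the strip and have pairwise disjoint
interiors. -/
def OnlineStripPacks (A : List LShape → ℝ × ℝ) (l : List LShape) : Prop :=
  (∀ i : Fin l.length, planeTranslate (stripPlaceOf A l i) (l.get i).toSet ⊆ strip) ∧
  ∀ i j : Fin l.length, i ≠ j →
    Disjoint (interior (planeTranslate (stripPlaceOf A l i) (l.get i).toSet))
             (interior (planeTranslate (stripPlaceOf A l j) (l.get j).toSet))

/-!
Cut the strip into blocks `[m/2, (m+1)/2)` and let `w = 1/(2n)` be the width of the vertical arms.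
An item of `𝓛^n` that fits into the strip sits so low that its vertical arm must cross the height of
the horizontal arm of every item of smaller index. Horizontal arms are longer than a block, so the
items of one block are sorted by decreasing index from left to right, with gaps of at least `w`.

The adversary plays binary search. It draws all future indices from an open interval and presents
the midpoint `c`. If the algorithm puts this item at `x`, then continuing with larger (smaller)
indices forces all later items of the block of `x` to its left (right). Of the free positions of the
block, the left and the right part are at least `2w` apart, so for one of them the spread plus `2w`
has dropped to at most half; the adversary continues on that side. As this quantity starts below
`(n + 2)w` and is at least `2w` whenever another item fits, a block receives `k` items only
if `2 ^ k < n + 2`. A packing of width `W` uses at most `2W` blocks, hence `n ≤ 2W log₂(n + 1)`.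

Offline, the items are nested from left to right by decreasing index, which fits into the unit
square because `∑_{k > a} 2^(-k-1) ≤ 2^(-a-1)`.
-/

open Set

/-! ### Translated L-shapes -/

lemma interior_Icc_prod (a b : ℝ × ℝ) : interior (Icc a b) = Ioo a.1 b.1 ×ˢ Ioo a.2 b.2 := by
  rw [Icc_prod_eq, interior_prod_eq, interior_Icc, interior_Icc]

lemma disjoint_interior_Icc_prod_iff {a b c d : ℝ × ℝ} :
    Disjoint (interior (Icc a b)) (interior (Icc c d)) ↔
      min b.1 d.1 ≤ max a.1 c.1 ∨ min b.2 d.2 ≤ max a.2 c.2 := by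
  rw [interior_Icc_prod, interior_Icc_prod, disjoint_prod, Ioo_disjoint_Ioo, Ioo_disjoint_Ioo]

namespace LShape

variable {L K : LShape} {u v : ℝ × ℝ}

/-- The inner corner `(wx, wy)` of an L-shape, where its two arms meet. -/
def corner (L : LShape) : ℝ × ℝ := (L.wx, L.wy)

lemma planeTranslate_toSet (L : LShape) (v : ℝ × ℝ) :
    planeTranslate v L.toSet = Icc v (v + (L.lx, L.wy)) ∪ Icc v (v + (L.wx, L.ly)) := by
  simp only [planeTranslate, toSet, image_union, image_add_const_Icc, Prod.mk_zero_zero, zero_add]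
  rw [add_comm v, add_comm v]

lemma horizontalArm_subset (L : LShape) (v : ℝ × ℝ) :
    Icc v (v + (L.lx, L.wy)) ⊆ planeTranslate v L.toSet :=
  L.planeTranslate_toSet v ▸ subset_union_left

lemma verticalArm_subset (L : LShape) (v : ℝ × ℝ) :
    Icc v (v + (L.wx, L.ly)) ⊆ planeTranslate v L.toSet :=
  L.planeTranslate_toSet v ▸ subset_union_right

lemma planeTranslate_toSet_subset_Ici (L : LShape) (v : ℝ × ℝ) :
    planeTranslate v L.toSet ⊆ Ici v :=
  L.planeTranslate_toSet v ▸ union_subset Icc_subset_Ici_self Icc_subset_Ici_self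

lemma isCompact_planeTranslate_toSet (L : LShape) (v : ℝ × ℝ) :
    IsCompact (planeTranslate v L.toSet) :=
  L.planeTranslate_toSet v ▸ isCompact_Icc.union isCompact_Icc

lemma disjoint_interior_of_add_corner_le (h : u + K.corner ≤ v) :
    Disjoint (interior (planeTranslate u K.toSet)) (interior (planeTranslate v L.toSet)) := by
  have interior_subset_Ioi :
      interior (planeTranslate v L.toSet) ⊆ Ioi v.1 ×ˢ Ioi v.2 := by
    rw [← interior_Ici, ← interior_Ici, ← interior_prod_eq, Ici_prod_Ici]
    exact interior_mono (L.planeTranslate_toSet_subset_Ici v)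
  refine disjoint_left.2 fun z hzK hzL => ?_
  obtain ⟨hx, hy⟩ := interior_subset_Ioi hzL
  have hzK' := interior_subset hzK
  rw [planeTranslate_toSet] at hzK'
  rcases hzK' with hz | hz
  · exact (h.2.trans_lt hy).not_ge hz.2.2
  · exact (h.1.trans_lt hx).not_ge hz.2.1

lemma IsValid.fst_add_lx_mem_image (hL : L.IsValid) (v : ℝ × ℝ) :
    v.1 + L.lx ∈ (fun p : ℝ × ℝ => p.1) '' planeTranslate v L.toSet := by
  obtain ⟨hwx, hlx, -, hwy, -, -⟩ := hL
  refine ⟨v + (L.lx, 0), L.horizontalArm_subset v ⟨?_, ?_⟩, rfl⟩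
  · exact le_add_of_nonneg_right ⟨hwx.trans hlx, le_rfl⟩
  · exact add_le_add_right (Prod.mk_le_mk.2 ⟨le_rfl, hwy⟩) v

lemma IsValid.bounds_of_subset_strip (hL : L.IsValid) (h : planeTranslate v L.toSet ⊆ strip) :
    0 ≤ v.1 ∧ 0 ≤ v.2 ∧ v.2 + L.ly ≤ 1 := by
  obtain ⟨hwx, -, -, hwy, hly, -⟩ := hL
  have le_top : v ≤ v + (L.wx, L.ly) := le_add_of_nonneg_right ⟨hwx, hwy.trans hly⟩
  have bottom_mem : v ∈ strip := h (L.verticalArm_subset v (left_mem_Icc.2 le_top))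
  have top_mem : v + (L.wx, L.ly) ∈ strip := h (L.verticalArm_subset v (right_mem_Icc.2 le_top))
  exact ⟨bottom_mem.1, bottom_mem.2.1, top_mem.2.2⟩

end LShape

/-! ### Packings -/

section Packing

variable {ι : Type*}

/-- The translates of the L-shapes `L i` by `v i` form a packing of `S`: they lie in `S` and have
pairwise disjoint interiors. -/
def IsPackingIn (S : Set (ℝ × ℝ)) (L : ι → LShape) (v : ι → ℝ × ℝ) : Prop :=
  (∀ i, planeTranslate (v i) (L i).toSet ⊆ S) ∧
  ∀ i j, i ≠ j →
    Disjoint (interior (planeTranslate (v i) (L i).toSet))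
             (interior (planeTranslate (v j) (L j).toSet))

/-- The width of a placement: the supremum of the covered `x`-coordinates. -/
noncomputable def placementWidth (L : ι → LShape) (v : ι → ℝ × ℝ) : ℝ :=
  sSup ((fun p : ℝ × ℝ => p.1) '' ⋃ i, planeTranslate (v i) (L i).toSet)

lemma fst_add_lx_le_placementWidth [Finite ι] {L : ι → LShape} (v : ι → ℝ × ℝ) {i : ι}
    (hL : (L i).IsValid) : (v i).1 + (L i).lx ≤ placementWidth L v := by
  have compact : IsCompact (⋃ i, planeTranslate (v i) (L i).toSet) :=
    isCompact_iUnion fun i => (L i).isCompact_planeTranslate_toSet (v i)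
  exact le_csSup (compact.image continuous_fst).bddAbove
    (image_mono (subset_iUnion _ i) (hL.fst_add_lx_mem_image (v i)))

/-- The translations chosen by the online algorithm `A` when it is given the items `L 0`, `L 1`,
and so on. -/
def onlinePlacement (A : List LShape → ℝ × ℝ) {k : ℕ} (L : Fin k → LShape) (i : Fin k) : ℝ × ℝ :=
  A ((List.ofFn L).take (i + 1))

lemma OnlineStripPacks.isPackingIn_strip {A : List LShape → ℝ × ℝ} {k : ℕ} {L : Fin k → LShape}
    (h : OnlineStripPacks A (List.ofFn L)) : IsPackingIn strip L (onlinePlacement A L) := by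
  have length_eq : k = (List.ofFn L).length := by simp
  refine ⟨fun i => ?_, fun i j hij => ?_⟩
  · simpa [stripPlaceOf, onlinePlacement] using h.1 (i.cast length_eq)
  · simpa [stripPlaceOf, onlinePlacement] using
      h.2 (i.cast length_eq) (j.cast length_eq) (by simpa using hij)

/-- Nest the items by decreasing `key`: every item is placed at the sum of the inner corners of the
items of larger key. -/
noncomputable def nestedPlacement [Fintype ι] (L : ι → LShape) (key : ι → ℕ) (i : ι) : ℝ × ℝ :=
  ∑ k with key i < key k, (L k).corner

lemma nestedPlacement_add_corner_le [Fintype ι] {L : ι → LShape} (hL : ∀ i, 0 ≤ (L i).corner)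
    {key : ι → ℕ} {i j : ι} (hij : key j < key i) :
    nestedPlacement L key i + (L i).corner ≤ nestedPlacement L key j := by
  classical
  rw [nestedPlacement, nestedPlacement, add_comm,
    ← Finset.sum_insert (f := fun k => (L k).corner) (by simp)]
  refine Finset.sum_le_sum_of_subset_of_nonneg (fun k hk => ?_) fun k _ _ => hL k
  simp only [Finset.mem_insert, Finset.mem_filter, Finset.mem_univ, true_and] at hk ⊢
  rcases hk with rfl | hk
  · exact hij
  · exact hij.trans hk

lemma disjoint_interior_nestedPlacement [Fintype ι] {L : ι → LShape}
    (hL : ∀ i, 0 ≤ (L i).corner) {key : ι → ℕ} (hkey : Function.Injective key) {i j : ι}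
    (hij : i ≠ j) :
    Disjoint (interior (planeTranslate (nestedPlacement L key i) (L i).toSet))
      (interior (planeTranslate (nestedPlacement L key j) (L j).toSet)) := by
  rcases (hkey.ne hij).lt_or_gt with h | h
  · exact (LShape.disjoint_interior_of_add_corner_le (nestedPlacement_add_corner_le hL h)).symm
  · exact LShape.disjoint_interior_of_add_corner_le (nestedPlacement_add_corner_le hL h)

end Packing

/-! ### The family `𝓛^n` -/

section Lfam

variable {n a b : ℕ}

lemma Lfam_wy_pos (n a : ℕ) : 0 < (Lfam n a).wy := by
  simp only [Lfam]
  positivity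

lemma Lfam_wy_le_half (n a : ℕ) : (Lfam n a).wy ≤ 1 / 2 :=
  one_div_le_one_div_of_le two_pos (le_self_pow₀ one_le_two a.succ_ne_zero)

lemma Lfam_wy_lt_of_lt (n : ℕ) (h : b < a) : (Lfam n a).wy < (Lfam n b).wy :=
  one_div_lt_one_div_of_lt (by positivity) (pow_lt_pow_right₀ one_lt_two (by omega))

lemma Lfam_wx_pos (hn : 0 < n) (a : ℕ) : 0 < (Lfam n a).wx := by
  simp only [Lfam]
  positivity

lemma half_lt_Lfam_lx (hn : 0 < n) (a : ℕ) : 1 / 2 < (Lfam n a).lx :=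
  lt_add_of_pos_right _ (Lfam_wx_pos hn a)

lemma Lfam_isValid (hn : 0 < n) (a : ℕ) : (Lfam n a).IsValid := by
  have wx_le_half : (1 : ℝ) / (2 * n) ≤ 1 / 2 := by
    have : (1 : ℝ) ≤ n := by exact_mod_cast hn
    exact one_div_le_one_div_of_le two_pos (by linarith)
  have wy_le_half := Lfam_wy_le_half n a
  have wy_pos := Lfam_wy_pos n a
  refine ⟨(Lfam_wx_pos hn a).le, ?_, ?_, wy_pos.le, ?_, ?_⟩ <;>
    simp only [Lfam] at wy_pos wy_le_half ⊢ <;> linarith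

/-- The vertical arm of the item of larger index crosses the height of the horizontal arm of the
other item, so the two arms must be disjoint horizontally. -/
lemma Lfam_fst_add_wx_le (hn : 0 < n) (hab : b < a) {u v : ℝ × ℝ}
    (hu : planeTranslate u (Lfam n a).toSet ⊆ strip)
    (hv : planeTranslate v (Lfam n b).toSet ⊆ strip)
    (hdisj : Disjoint (interior (planeTranslate u (Lfam n a).toSet))
      (interior (planeTranslate v (Lfam n b).toSet)))
    (huv : u.1 - v.1 ≤ 1 / 2) : u.1 + 1 / (2 * n) ≤ v.1 := by
  obtain ⟨-, hu_nonneg, hu_le⟩ := (Lfam_isValid hn a).bounds_of_subset_strip hu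
  obtain ⟨-, hv_nonneg, hv_le⟩ := (Lfam_isValid hn b).bounds_of_subset_strip hv
  have arms_disjoint := disjoint_interior_Icc_prod_iff.1 <| hdisj.mono
    (interior_mono ((Lfam n a).verticalArm_subset u))
    (interior_mono ((Lfam n b).horizontalArm_subset v))
  have wx_pos := Lfam_wx_pos hn a
  have wy_pos := Lfam_wy_pos n a
  have wy_lt := Lfam_wy_lt_of_lt n hab
  have wy_le_half := Lfam_wy_le_half n b
  simp only [Lfam, Prod.fst_add, Prod.snd_add, min_le_iff, le_max_iff] at *
  rcases arms_disjoint with ((h | h) | (h | h)) | ((h | h) | (h | h)) <;> linarith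

lemma sum_one_div_two_pow_succ_le {s : Finset ℕ} {a : ℕ} (hs : ∀ k ∈ s, a < k) :
    ∑ k ∈ s, (1 : ℝ) / 2 ^ (k + 1) ≤ 1 / 2 ^ (a + 1) := by
  have hsub : s ⊆ Finset.Ico (a + 1) (s.sup id + 1) := fun k hk =>
    Finset.mem_Ico.2 ⟨hs k hk, Nat.lt_succ_of_le (Finset.le_sup (f := id) hk)⟩
  calc ∑ k ∈ s, (1 : ℝ) / 2 ^ (k + 1)
      ≤ ∑ k ∈ Finset.Ico (a + 1) (s.sup id + 1), (1 : ℝ) / 2 ^ (k + 1) :=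
        Finset.sum_le_sum_of_subset_of_nonneg hsub fun _ _ _ => by positivity
    _ = 1 / 2 * ∑ k ∈ Finset.Ico (a + 1) (s.sup id + 1), (1 / 2 : ℝ) ^ k := by
        rw [Finset.mul_sum]
        exact Finset.sum_congr rfl fun k _ => by rw [← one_div_pow, pow_succ']
    _ ≤ 1 / 2 * ((1 / 2) ^ (a + 1) / (1 - 1 / 2)) := by
        gcongr
        exact geom_sum_Ico_le_of_lt_one (by norm_num) (by norm_num)
    _ = 1 / 2 ^ (a + 1) := by
        rw [one_div_pow]
        ring

variable {ι : Type*} [Fintype ι]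

lemma nestedPlacement_Lfam_fst_add_lx_le (hcard : Fintype.card ι ≤ n) (idx : ι → ℕ) (i : ι) :
    (nestedPlacement (fun k => Lfam n (idx k)) idx i).1 + (Lfam n (idx i)).lx ≤ 1 := by
  set c : ℕ := Finset.card {k | idx i < idx k}
  have card_lt : c < Fintype.card ι := Finset.card_lt_univ_of_notMem (x := i) (by simp)
  have card_add_one_le : (c : ℝ) + 1 ≤ n := by exact_mod_cast card_lt.trans_le hcard
  have n_pos : (0 : ℝ) < n := by linarith [c.cast_nonneg (α := ℝ)]
  calc (nestedPlacement (fun k => Lfam n (idx k)) idx i).1 + (Lfam n (idx i)).lx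
      = 1 / 2 + (c + 1) / (2 * n) := by
        simp only [nestedPlacement, LShape.corner, Lfam, Prod.fst_sum, Finset.sum_const,
          nsmul_eq_mul]
        ring
    _ ≤ 1 / 2 + n / (2 * n) := by gcongr
    _ = 1 := by
        field_simp
        norm_num

lemma nestedPlacement_Lfam_snd_le {idx : ι → ℕ} (hinj : Function.Injective idx) (i : ι) :
    (nestedPlacement (fun k => Lfam n (idx k)) idx i).2 ≤ (Lfam n (idx i)).wy := by
  simp only [nestedPlacement, LShape.corner, Lfam, Prod.snd_sum]
  rw [← Finset.sum_image (f := fun k => (1 : ℝ) / 2 ^ (k + 1)) hinj.injOn]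
  refine sum_one_div_two_pow_succ_le fun k hk => ?_
  obtain ⟨j, hj, rfl⟩ := Finset.mem_image.1 hk
  exact (Finset.mem_filter.1 hj).2

lemma isPackingIn_unitBin_nestedPlacement (hcard : Fintype.card ι ≤ n) {idx : ι → ℕ}
    (hinj : Function.Injective idx) :
    IsPackingIn unitBin (fun i => Lfam n (idx i))
      (nestedPlacement (fun i => Lfam n (idx i)) idx) := by
  have hn (i : ι) : 0 < n := (Fintype.card_pos_iff.2 ⟨i⟩).trans_le hcard
  have corner_nonneg (i : ι) : 0 ≤ (Lfam n (idx i)).corner :=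
    ⟨(Lfam_wx_pos (hn i) (idx i)).le, (Lfam_wy_pos n (idx i)).le⟩
  refine ⟨fun i => ?_, fun i j => disjoint_interior_nestedPlacement corner_nonneg hinj⟩
  obtain ⟨-, wx_le_lx, -, -, wy_le_ly, -⟩ := Lfam_isValid (hn i) (idx i)
  have origin_le : 0 ≤ nestedPlacement (fun k => Lfam n (idx k)) idx i :=
    Finset.sum_nonneg fun k _ => corner_nonneg k
  have hx := nestedPlacement_Lfam_fst_add_lx_le hcard idx i
  have hy := nestedPlacement_Lfam_snd_le (n := n) hinj i
  have ly_eq : (Lfam n (idx i)).ly = 1 - (Lfam n (idx i)).wy := rfl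
  rw [LShape.planeTranslate_toSet]
  refine union_subset (Icc_subset_Icc origin_le ⟨hx, ?_⟩) (Icc_subset_Icc origin_le ⟨?_, ?_⟩) <;>
    simp only [Prod.fst_add, Prod.snd_add] <;> linarith

end Lfam

/-! ### The binary search adversary -/

section Transcript

variable {α β : Type*}

/-- The requests `l` to the online algorithm `P`, each paired with the answer of `P`. The recursion
feeds the tail of `l` to the algorithm that has already seen its head. -/
def transcript (P : List α → β) : List α → List (α × β)
  | [] => []
  | a :: l => (a, P [a]) :: transcript (fun t => P (a :: t)) l

lemma map_fst_transcript (P : List α → β) (l : List α) : (transcript P l).map Prod.fst = l := by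
  induction l generalizing P with
  | nil => rfl
  | cons a l ih => rw [transcript, List.map_cons, ih]

lemma fst_mem_of_mem_transcript {P : List α → β} {l : List α} {p : α × β}
    (hp : p ∈ transcript P l) : p.1 ∈ l :=
  map_fst_transcript P l ▸ List.mem_map_of_mem hp

lemma transcript_ofFn (P : List α → β) {k : ℕ} (f : Fin k → α) :
    transcript P (List.ofFn f) = List.ofFn fun i => (f i, P ((List.ofFn f).take (i + 1))) := by
  induction k generalizing P with
  | zero => simp [transcript]
  | succ k ih => simp [List.ofFn_succ, transcript, ih]

end Transcript

/-- Any two points of `S` are less than `d` apart. -/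
def SpreadLT (S : Set ℝ) (d : ℝ) : Prop := ∀ y ∈ S, ∀ z ∈ S, z - y < d

lemma SpreadLT.left_or_right {S : Set ℝ} {w c : ℝ} (h : SpreadLT S (c - 2 * w)) (x : ℝ) :
    SpreadLT (S ∩ {y | y + w ≤ x}) (c / 2 - 2 * w) ∨
      SpreadLT (S ∩ {y | x + w ≤ y}) (c / 2 - 2 * w) := by
  by_contra! hwide
  simp only [SpreadLT, not_forall, not_lt] at hwide
  obtain ⟨⟨y, hy, z, ⟨-, hzx⟩, hyz⟩, y', ⟨-, hxy'⟩, z', hz', hyz'⟩ := hwide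
  have := h y hy.1 z' hz'.1
  rw [mem_ofPred_eq] at hzx hxy'
  linarith

section Adversary

variable {ι : Type*} {block : ℝ → ι} {w : ℝ}

/-- Items `p` and `q`, given as pairs of index and position, are separated by `w` and sorted by
decreasing index if they lie in the same block. -/
def SortedInBlocks (block : ℝ → ι) (w : ℝ) (p q : ℕ × ℝ) : Prop :=
  block p.2 = block q.2 →
    (p.1 < q.1 → q.2 + w ≤ p.2) ∧ (q.1 < p.1 → p.2 + w ≤ q.2)

/-- A position of the game between the adversary and the online algorithm `P`, which has absorbed
the past requests. Future indices come from `Ioo lo hi` and force `P` to answer in the set `F` of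
free positions. The capacity `C m` bounds the spread of the free positions of block `m`, plus
`2 * w`. -/
structure AdversaryState (block : ℝ → ι) (w : ℝ) (P : List ℕ → ℝ) (lo hi : ℕ) (F : Set ℝ)
    (C : ι → ℝ) : Prop where
  sorted : ∀ l : List ℕ, (∀ a ∈ l, a ∈ Ioo lo hi) →
    (transcript P l).Pairwise (SortedInBlocks block w)
  free : ∀ l : List ℕ, (∀ a ∈ l, a ∈ Ioo lo hi) → ∀ p ∈ transcript P l, p.2 ∈ F
  lt_capacity : ∀ m, w < C m
  spread : ∀ m, SpreadLT (F ∩ block ⁻¹' {m}) (C m - 2 * w)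

namespace AdversaryState

variable [DecidableEq ι] {P : List ℕ → ℝ} {lo hi : ℕ} {F : Set ℝ} {C : ι → ℝ}

lemma after_request (S : AdversaryState block w P lo hi F C) {c lo' hi' : ℕ} {G : Set ℝ}
    (hc : c ∈ Ioo lo hi) (hsub : Ioo lo' hi' ⊆ Ioo lo hi)
    (hG : ∀ a ∈ Ioo lo' hi', ∀ y, block (P [c]) = block y →
      SortedInBlocks block w (c, P [c]) (a, y) → y ∈ G)
    (hspread : SpreadLT (F ∩ block ⁻¹' {block (P [c])} ∩ G) (C (block (P [c])) / 2 - 2 * w)) :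
    AdversaryState block w (fun t => P (c :: t)) lo' hi' {y ∈ F | block (P [c]) = block y → y ∈ G}
      (Function.update C (block (P [c])) (C (block (P [c])) / 2)) := by
  have mem_cons {l : List ℕ} (hl : ∀ a ∈ l, a ∈ Ioo lo' hi') : ∀ a ∈ c :: l, a ∈ Ioo lo hi :=
    List.forall_mem_cons.2 ⟨hc, fun a ha => hsub (hl a ha)⟩
  refine ⟨fun l hl => (S.sorted _ (mem_cons hl)).of_cons, fun l hl p hp => ⟨?_, ?_⟩, ?_, ?_⟩
  · exact S.free _ (mem_cons hl) p (List.mem_cons_of_mem _ hp)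
  · exact fun hblock => hG p.1 (hl _ (fst_mem_of_mem_transcript hp)) p.2 hblock
      (List.rel_of_pairwise_cons (S.sorted _ (mem_cons hl)) hp)
  · have answer_free : P [c] ∈ F := S.free [c] (by simpa using hc) (c, P [c]) (by simp [transcript])
    have := S.spread _ _ ⟨answer_free, rfl⟩ _ ⟨answer_free, rfl⟩
    rw [Function.forall_update_iff C fun _ d => w < d]
    exact ⟨by linarith, fun m _ => S.lt_capacity m⟩
  · rw [Function.forall_update_iff C fun m d => SpreadLT (_ ∩ block ⁻¹' {m}) (d - 2 * w)]
    refine ⟨fun y hy z hz => hspread y ?_ z ?_, fun m _ y hy z hz => S.spread m y ?_ z ?_⟩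
    · exact ⟨⟨hy.1.1, hy.2⟩, hy.1.2 hy.2.symm⟩
    · exact ⟨⟨hz.1.1, hz.2⟩, hz.1.2 hz.2.symm⟩
    · exact ⟨hy.1.1, hy.2⟩
    · exact ⟨hz.1.1, hz.2⟩

lemma exists_after_request (S : AdversaryState block w P lo hi F C) {r : ℕ}
    (hroom : lo + 2 ^ (r + 1) ≤ hi) :
    ∃ c ∈ Ioo lo hi, ∃ lo' hi' F', lo' + 2 ^ r ≤ hi' ∧ Ioo lo' hi' ⊆ Ioo lo hi ∧
      c ∉ Ioo lo' hi' ∧ AdversaryState block w (fun t => P (c :: t)) lo' hi' F'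
        (Function.update C (block (P [c])) (C (block (P [c])) / 2)) := by
  have two_pow_pos : 0 < 2 ^ r := Nat.two_pow_pos r
  rw [pow_succ] at hroom
  have hc : lo + 2 ^ r ∈ Ioo lo hi := ⟨by omega, by omega⟩
  refine ⟨lo + 2 ^ r, hc, ?_⟩
  rcases (S.spread _).left_or_right (P [lo + 2 ^ r]) with hleft | hright
  · have hsub : Ioo (lo + 2 ^ r) hi ⊆ Ioo lo hi := Ioo_subset_Ioo_left hc.1.le
    exact ⟨_, hi, _, by omega, hsub, fun h => h.1.false,
      S.after_request hc hsub (fun a ha y hblock hsort => (hsort hblock).1 ha.1) hleft⟩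
  · have hsub : Ioo lo (lo + 2 ^ r) ⊆ Ioo lo hi := Ioo_subset_Ioo_right hc.2.le
    exact ⟨lo, _, _, le_rfl, hsub, fun h => h.2.false,
      S.after_request hc hsub (fun a ha y hblock hsort => (hsort hblock).2 ha.2) hright⟩

theorem exists_requests_two_pow_count_mul_lt (S : AdversaryState block w P lo hi F C) {r : ℕ}
    (hroom : lo + 2 ^ r ≤ hi) :
    ∃ l : List ℕ, l.length = r ∧ l.Nodup ∧ (∀ a ∈ l, a ∈ Ioo lo hi) ∧
      ∀ m, 2 ^ ((transcript P l).map fun p => block p.2).count m * w < C m := by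
  induction r generalizing P lo hi F C with
  | zero => exact ⟨[], rfl, List.nodup_nil, by simp, by simpa [transcript] using S.lt_capacity⟩
  | succ r ih =>
    obtain ⟨c, hc, lo', hi', F', hroom', hsub, hc', S'⟩ := S.exists_after_request hroom
    obtain ⟨l, hlen, hnodup, hl, hcount⟩ := ih S' hroom'
    refine ⟨c :: l, by simp [hlen], List.nodup_cons.2 ⟨fun h => hc' (hl c h), hnodup⟩,
      List.forall_mem_cons.2 ⟨hc, fun a ha => hsub (hl a ha)⟩, fun m => ?_⟩
    have hcount_m := hcount m
    rw [transcript, List.map_cons]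
    rcases eq_or_ne m (block (P [c])) with rfl | hm
    · rw [Function.update_self] at hcount_m
      rw [List.count_cons_self, pow_succ]
      linarith
    · rwa [List.count_cons_of_ne hm.symm, ← Function.update_of_ne hm (C (block (P [c])) / 2) C]

end AdversaryState

end Adversary

/-! ### The lower bound -/

lemma length_le_logb_mul {xs : List ℝ} {R : ℝ} (hR : 0 ≤ R) (hxs : ∀ x ∈ xs, x ∈ Icc 0 R) {N : ℕ}
    (hcount : ∀ m, 2 ^ (xs.map fun x => ⌊2 * x⌋).count m ≤ N) :
    (xs.length : ℝ) ≤ Real.logb 2 N * (2 * R + 1) := by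
  have blocks_mem : ∀ m ∈ (xs.map fun x => ⌊2 * x⌋), m ∈ Finset.Icc 0 ⌊2 * R⌋ := by
    simp only [List.forall_mem_map]
    intro x hx
    obtain ⟨hx_nonneg, hx_le⟩ := hxs x hx
    exact Finset.mem_Icc.2 ⟨by positivity, by gcongr⟩
  have length_le : xs.length ≤ (Finset.Icc 0 ⌊2 * R⌋).card * Nat.log 2 N := by
    calc xs.length = ∑ m ∈ Finset.Icc 0 ⌊2 * R⌋, (xs.map fun x => ⌊2 * x⌋).count m := by
          simpa using (Multiset.sum_count_eq_card
            (m := (xs.map fun x => ⌊2 * x⌋ : Multiset ℤ)) (by simpa using blocks_mem)).symm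
      _ ≤ (Finset.Icc 0 ⌊2 * R⌋).card * Nat.log 2 N :=
          Finset.sum_le_card_nsmul _ _ _ fun m _ => Nat.le_log_of_pow_le one_lt_two (hcount m)
  have card_le : ((Finset.Icc 0 ⌊2 * R⌋).card : ℝ) ≤ 2 * R + 1 := by
    have floor_nonneg : 0 ≤ ⌊2 * R⌋ := by positivity
    have card_eq : ((Finset.Icc 0 ⌊2 * R⌋).card : ℤ) = ⌊2 * R⌋ + 1 := by
      rw [Int.card_Icc_of_le _ _ (by omega), sub_zero]
    calc ((Finset.Icc 0 ⌊2 * R⌋).card : ℝ) = ⌊2 * R⌋ + 1 := by exact_mod_cast card_eq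
      _ ≤ 2 * R + 1 := by gcongr; exact Int.floor_le _
  calc (xs.length : ℝ) ≤ (Finset.Icc 0 ⌊2 * R⌋).card * Nat.log 2 N := by exact_mod_cast length_le
    _ ≤ (2 * R + 1) * Real.logb 2 N := by
        gcongr
        exact_mod_cast Real.natLog_le_logb N 2
    _ = Real.logb 2 N * (2 * R + 1) := mul_comm _ _

section LowerBound

variable {A : List LShape → ℝ × ℝ} {n : ℕ}

/-- The `x`-coordinate chosen by `A` for the last item of a sequence of items of `𝓛^n`, given by
their indices. -/
noncomputable def onlineAbscissa (A : List LShape → ℝ × ℝ) (n : ℕ) (l : List ℕ) : ℝ :=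
  (A (l.map (Lfam n))).1

lemma transcript_onlineAbscissa_ofFn (A : List LShape → ℝ × ℝ) (n : ℕ) {k : ℕ} (idx : Fin k → ℕ) :
    transcript (onlineAbscissa A n) (List.ofFn idx) =
      List.ofFn fun i => (idx i, (onlinePlacement A (fun j => Lfam n (idx j)) i).1) := by
  simp only [transcript_ofFn, onlineAbscissa, onlinePlacement, List.map_take, List.map_ofFn]
  rfl

lemma isPackingIn_strip_onlinePlacement
    (hA : ∀ l : List ℕ, (∀ a ∈ l, 1 ≤ a) → OnlineStripPacks A (l.map (Lfam n))) {k : ℕ}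
    {idx : Fin k → ℕ} (hidx : ∀ i, 1 ≤ idx i) :
    IsPackingIn strip (fun i => Lfam n (idx i)) (onlinePlacement A fun i => Lfam n (idx i)) := by
  have packs := hA (List.ofFn idx) (by simpa [List.forall_mem_ofFn_iff] using hidx)
  rw [List.map_ofFn] at packs
  exact packs.isPackingIn_strip

lemma pairwise_sortedInBlocks_transcript (hn : 0 < n)
    (hA : ∀ l : List ℕ, (∀ a ∈ l, 1 ≤ a) → OnlineStripPacks A (l.map (Lfam n))) {l : List ℕ}
    (hl : ∀ a ∈ l, 1 ≤ a) :
    (transcript (onlineAbscissa A n) l).Pairwise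
      (SortedInBlocks (fun x => ⌊2 * x⌋) (1 / (2 * n))) := by
  obtain ⟨hstrip, hdisj⟩ := isPackingIn_strip_onlinePlacement hA (idx := l.get) fun i =>
    hl _ (l.get_mem i)
  rw [← List.ofFn_get l, transcript_onlineAbscissa_ofFn, List.pairwise_ofFn]
  intro i j hij hblock
  have close := abs_lt.1 (Int.abs_sub_lt_one_of_floor_eq_floor hblock)
  exact ⟨fun h => Lfam_fst_add_wx_le hn h (hstrip j) (hstrip i) (hdisj j i hij.ne') (by linarith),
    fun h => Lfam_fst_add_wx_le hn h (hstrip i) (hstrip j) (hdisj i j hij.ne) (by linarith)⟩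

lemma adversaryState_onlineAbscissa (hn : 0 < n)
    (hA : ∀ l : List ℕ, (∀ a ∈ l, 1 ≤ a) → OnlineStripPacks A (l.map (Lfam n))) (hi : ℕ) :
    AdversaryState (fun x => ⌊2 * x⌋) (1 / (2 * n)) (onlineAbscissa A n) 0 hi univ
      fun _ => (n + 2) * (1 / (2 * n)) where
  sorted l hl := pairwise_sortedInBlocks_transcript hn hA fun a ha => (hl a ha).1
  free _ _ _ _ := mem_univ _
  lt_capacity _ := by
    have : (0 : ℝ) < n := by exact_mod_cast hn
    exact lt_mul_of_one_lt_left (by positivity) (by linarith)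
  spread m := by
    rintro y ⟨-, rfl⟩ z ⟨-, hz⟩
    have close := abs_lt.1 (Int.abs_sub_lt_one_of_floor_eq_floor hz)
    have block_length : (n + 2) * (1 / (2 * n)) - 2 * (1 / (2 * n)) = (1 / 2 : ℝ) := by
      field_simp
      ring
    linarith

lemma exists_idx_two_pow_count_le (hn : 0 < n)
    (hA : ∀ l : List ℕ, (∀ a ∈ l, 1 ≤ a) → OnlineStripPacks A (l.map (Lfam n))) :
    ∃ idx : Fin n → ℕ, Function.Injective idx ∧ (∀ i, 1 ≤ idx i) ∧
      ∀ m, 2 ^ ((List.ofFn fun i => (onlinePlacement A (fun j => Lfam n (idx j)) i).1).map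
        fun x => ⌊2 * x⌋).count m ≤ n + 1 := by
  obtain ⟨l, hlen, hnodup, hl, hcount⟩ :=
    (adversaryState_onlineAbscissa hn hA (2 ^ n)).exists_requests_two_pow_count_mul_lt (r := n)
      (zero_add _).le
  obtain ⟨idx, rfl⟩ : ∃ idx : Fin n → ℕ, List.ofFn idx = l := by
    subst hlen
    exact ⟨l.get, List.ofFn_get l⟩
  refine ⟨idx, List.nodup_ofFn.1 hnodup, fun i => (hl _ (List.mem_ofFn.2 ⟨i, rfl⟩)).1,
    fun m => Nat.lt_succ_iff.1 ?_⟩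
  have hcount_m := lt_of_mul_lt_mul_right (hcount m) (by positivity)
  rw [transcript_onlineAbscissa_ofFn, List.map_ofFn] at hcount_m
  rw [List.map_ofFn]
  exact_mod_cast hcount_m

lemma natCast_le_logb_mul_placementWidth (hn : 0 < n) {idx : Fin n → ℕ} {v : Fin n → ℝ × ℝ}
    (hv : IsPackingIn strip (fun i => Lfam n (idx i)) v)
    (hcount : ∀ m, 2 ^ ((List.ofFn fun i => (v i).1).map fun x => ⌊2 * x⌋).count m ≤ n + 1) :
    (n : ℝ) ≤ Real.logb 2 (n + 1) * (2 * placementWidth (fun i => Lfam n (idx i)) v) := by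
  set W := placementWidth (fun i => Lfam n (idx i)) v
  have fst_nonneg (i : Fin n) : 0 ≤ (v i).1 :=
    ((Lfam_isValid hn _).bounds_of_subset_strip (hv.1 i)).1
  have fst_le (i : Fin n) : (v i).1 ≤ W - 1 / 2 := by
    have lx_le := fst_add_lx_le_placementWidth v (L := fun i => Lfam n (idx i)) (i := i)
      (Lfam_isValid hn _)
    linarith [half_lt_Lfam_lx hn (idx i)]
  have := length_le_logb_mul ((fst_nonneg ⟨0, hn⟩).trans (fst_le ⟨0, hn⟩))
    (List.forall_mem_ofFn_iff.2 fun i => ⟨fst_nonneg i, fst_le i⟩) hcount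
  rw [List.length_ofFn] at this
  convert this using 2
  · push_cast
    rfl
  · ring

end LowerBound

theorem stmt5_general (A : List LShape → ℝ × ℝ) {n : ℕ} (hn : 0 < n)
    (hA : ∀ l : List ℕ, (∀ a ∈ l, 1 ≤ a) → OnlineStripPacks A (l.map (Lfam n))) :
    ∃ idx : Fin n → ℕ, Function.Injective idx ∧ (∀ i, 1 ≤ idx i) ∧
      (∃ v, IsPackingIn unitBin (fun i => Lfam n (idx i)) v) ∧
      (n : ℝ) / Real.logb 2 (n + 1) / 2 ≤
        placementWidth (fun i => Lfam n (idx i)) (onlinePlacement A fun i => Lfam n (idx i)) := by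
  obtain ⟨idx, hinj, hpos, hcount⟩ := exists_idx_two_pow_count_le hn hA
  refine ⟨idx, hinj, hpos, ⟨_, isPackingIn_unitBin_nestedPlacement (by simp) hinj⟩, ?_⟩
  have logb_pos : 0 < Real.logb 2 (n + 1) := Real.logb_pos one_lt_two (by simpa using hn)
  rw [div_le_iff₀' two_pos, div_le_iff₀' logb_pos]
  exact natCast_le_logb_mul_placementWidth hn (isPackingIn_strip_onlinePlacement hA hpos) hcount

/-- for every deterministic online strip-packing algorithm for L-shapes and
every `n ≥ 2`, there is a sequence of `n` pairwise distinct L-shapes from `𝓛^n` packable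
offline into the unit square (optimal width ≤ 1), on which the width produced by the
algorithm (the supremum of covered x-coordinates) is at least `(n/log₂(n+1) − 2)/2`. -/
theorem stmt5 (A : List LShape → ℝ × ℝ)
    (hA : ∀ l : List LShape, (∀ L ∈ l, L.IsValid) → OnlineStripPacks A l)
    (n : ℕ) (hn : 2 ≤ n) :
    ∃ idx : Fin n → ℕ, Function.Injective idx ∧ (∀ i, 1 ≤ idx i) ∧
      (∃ v : Fin n → ℝ × ℝ,
        (∀ i, planeTranslate (v i) (Lfam n (idx i)).toSet ⊆ unitBin) ∧
        ∀ i j, i ≠ j →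
          Disjoint (interior (planeTranslate (v i) (Lfam n (idx i)).toSet))
                   (interior (planeTranslate (v j) (Lfam n (idx j)).toSet))) ∧
      ((n : ℝ) / Real.logb 2 (n + 1) - 2) / 2 ≤
        sSup ((fun p : ℝ × ℝ => p.1) ''
          ⋃ i : Fin n,
            planeTranslate (A ((List.ofFn fun j => Lfam n (idx j)).take (i.1 + 1)))
              (Lfam n (idx i)).toSet) := by
  have hn_pos : 0 < n := by omega
  obtain ⟨idx, hinj, hpos, hpack, hwidth⟩ := stmt5_general A hn_pos fun l _ =>
    hA _ (List.forall_mem_map.2 fun a _ => Lfam_isValid hn_pos a)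
  exact ⟨idx, hinj, hpos, hpack, le_trans (by linarith) hwidth⟩
end

section
/- There exists a deterministic online bin-packing algorithm A such that for every finite input sequence I of L-shapes that are symmetric (ℓx = ℓy and wx = wy) and large (ℓx = ℓy > 1/2), the number of bins used by A on I is at most 33·OPT(I) + 2. -/
/-- The online decision (bin index, translation vector) made by algorithm `A` for the `i`-th
item of the list `l`: it depends only on the first `i+1` items. -/
def placeOf (A : List LShape → ℕ × ℝ × ℝ) (l : List LShape) (i : Fin l.length) : ℕ × ℝ × ℝ :=
  A (l.take (i.1 + 1))

/-- The placements produced by `A` on input `l` form valid bin packings: each translate lies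
in the unit bin, and items in the same bin have pairwise disjoint interiors. -/
def OnlinePacks (A : List LShape → ℕ × ℝ × ℝ) (l : List LShape) : Prop :=
  (∀ i : Fin l.length, planeTranslate (placeOf A l i).2 (l.get i).toSet ⊆ unitBin) ∧
  ∀ i j : Fin l.length, i ≠ j → (placeOf A l i).1 = (placeOf A l j).1 →
    Disjoint (interior (planeTranslate (placeOf A l i).2 (l.get i).toSet))
             (interior (planeTranslate (placeOf A l j).2 (l.get j).toSet))

/-- The number of distinct bins used by `A` on input `l`. -/
def binsUsed (A : List LShape → ℕ × ℝ × ℝ) (l : List LShape) : ℕ :=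
  ((Finset.univ : Finset (Fin l.length)).image fun i => (placeOf A l i).1).card

/-- The items of `l` can be packed offline into `m` unit bins. -/
def OffPacks (l : List LShape) (m : ℕ) : Prop :=
  ∃ (bin : Fin l.length → ℕ) (v : Fin l.length → ℝ × ℝ),
    (∀ i, bin i < m) ∧
    (∀ i, planeTranslate (v i) (l.get i).toSet ⊆ unitBin) ∧
    ∀ i j, i ≠ j → bin i = bin j →
      Disjoint (interior (planeTranslate (v i) (l.get i).toSet))
               (interior (planeTranslate (v j) (l.get j).toSet))

/-- The offline optimum: the minimum number of unit bins into which `l` can be packed. -/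
noncomputable def OPT (l : List LShape) : ℕ := sInf {m | OffPacks l m}

/-!
A vertical arm of length more than `1/2` inside the unit bin crosses the line `y = 1/2`, so the
vertical arms of one bin occupy disjoint intervals of abscissae: a packing is a schedule of jobs of
length `wx` to be started in `[0, 1 - ℓx]`. Conversely, a schedule yields a packing if the reference
points are put on the diagonal, because `min x y` lies in the running interval of the job at every
interior point `(x, y)` of the L-shape. So it suffices to schedule jobs online on few machines.

* Jobs with width less than a quarter of their deadline are grouped by the largest power of two `r`
  below the deadline. Group `r` owns the time range `[3/4 r, 3/2 r)` on every machine: its jobs are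
  laid out consecutively on a half-line, and the jobs starting in the `k`-th piece of length `r/4`
  go to the `k`-th machine. Each optimal bin holds total width at most `5/2 r` of the group, so
  `10 * OPT + 1` machines suffice.
* All other jobs are started at their deadline. At most `5` such running intervals through a common
  point can come from one optimal bin, so no point is covered more than `5 * OPT` times, and the
  online interval colouring of Kierstead and Trotter needs three colours for each level of covering,
  hence at most `15 * OPT` machines.
-/

/-! ### Online interval colouring -/

/-- An online rule `F`, producing an output for each item of a sequence, is causal if its output
for the `i`-th item depends only on the items up to and including the `i`-th. -/
def IsCausal {α β : Type*} (F : (ℕ → α) → ℕ → β) : Prop :=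
  ∀ ⦃X Y : ℕ → α⦄ ⦃i : ℕ⦄, (∀ j ≤ i, X j = Y j) → F X i = F Y i

namespace IntervalColoring

section Level

variable {α : Type*} {S : ℕ → Set α} {i j k : ℕ} {p : α}

open Classical in
/-- Level of the `i`-th set of a sequence, in the sense of Kierstead and Trotter: the least `k` such
that every point of `S i` lies in fewer than `k` of the earlier sets of level at most `k`. It is `0`
exactly if `S i` is empty. -/
noncomputable def level (S : ℕ → Set α) (i : ℕ) : ℕ :=
  sInf {k | ∀ p ∈ S i, (Finset.univ.filter fun j : Fin i => level S j ≤ k ∧ p ∈ S j).card < k}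
termination_by i
decreasing_by all_goals exact Fin.is_lt _

open Classical in
/-- The indices before `i` of the sets of level at most `k` that contain `p`. -/
noncomputable def earlier (S : ℕ → Set α) (i k : ℕ) (p : α) : Finset ℕ :=
  {j ∈ Finset.range i | level S j ≤ k ∧ p ∈ S j}

lemma mem_earlier : j ∈ earlier S i k p ↔ j < i ∧ level S j ≤ k ∧ p ∈ S j := by
  simp [earlier]

lemma level_eq_sInf (S : ℕ → Set α) (i : ℕ) :
    level S i = sInf {k | ∀ p ∈ S i, (earlier S i k p).card < k} := by
  classical
  have earlier_eq (k : ℕ) (p : α) : earlier S i k p =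
      (Finset.univ.filter fun j : Fin i => level S j ≤ k ∧ p ∈ S j).map Fin.valEmbedding := by
    ext j
    simp [mem_earlier, Fin.exists_iff, and_left_comm, and_comm]
  rw [level]
  simp only [earlier_eq, Finset.card_map]

lemma card_earlier_level_lt (hp : p ∈ S i) : (earlier S i (level S i) p).card < level S i := by
  have feasible : i + 1 ∈ {k | ∀ p ∈ S i, (earlier S i k p).card < k} := fun p _ => by
    have earlier_subset : earlier S i (i + 1) p ⊆ Finset.range i := fun j hj =>
      Finset.mem_range.2 (mem_earlier.1 hj).1
    simpa [Nat.lt_succ_iff] using Finset.card_le_card earlier_subset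
  have level_mem := Nat.sInf_mem ⟨_, feasible⟩
  rw [← level_eq_sInf] at level_mem
  exact level_mem p hp

lemma level_pos (h : (S i).Nonempty) : 0 < level S i :=
  (Nat.zero_le _).trans_lt (card_earlier_level_lt h.some_mem)

open Classical in
lemma level_le {n M : ℕ} (hM : ∀ p, {j ∈ Finset.range n | p ∈ S j}.card ≤ M) (hi : i < n) :
    level S i ≤ M := by
  rw [level_eq_sInf]
  refine Nat.sInf_le fun p hp => lt_of_lt_of_le (Finset.card_lt_card ?_) (hM p)
  refine (Finset.ssubset_iff_of_subset fun j hj => ?_).2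
    ⟨i, by simp [hi, hp], by simp [mem_earlier]⟩
  obtain ⟨hji, -, hpj⟩ := mem_earlier.1 hj
  exact Finset.mem_filter.2 ⟨Finset.mem_range.2 (hji.trans hi), hpj⟩

/-- A peak of the `i`-th set is a point that forces the level of this set: it is covered
`level S i - 1` times by earlier sets of smaller level. -/
def IsPeak (S : ℕ → Set α) (i : ℕ) (p : α) : Prop :=
  p ∈ S i ∧ level S i ≤ (earlier S i (level S i - 1) p).card + 1

lemma exists_isPeak (h : (S i).Nonempty) : ∃ p, IsPeak S i p := by
  have level_pos := level_pos h
  have infeasible : level S i - 1 ∉ {k | ∀ p ∈ S i, (earlier S i k p).card < k} := by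
    apply Nat.notMem_of_lt_sInf
    rw [← level_eq_sInf]
    omega
  obtain ⟨p, hp, hcard⟩ : ∃ p ∈ S i, level S i - 1 ≤ (earlier S i (level S i - 1) p).card := by
    simpa using infeasible
  exact ⟨p, hp, by omega⟩

lemma IsPeak.notMem_of_lt {m n : ℕ} (hp : IsPeak S i p) (hnm : n < m) (him : i ≤ m)
    (hn : level S n = level S i) (hm : level S m = level S i) (hpn : p ∈ S n) : p ∉ S m := by
  intro hpm
  have level_pos := level_pos ⟨p, hp.1⟩
  have n_notMem : n ∉ earlier S i (level S i - 1) p := by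
    rw [mem_earlier]
    omega
  have insert_subset : insert n (earlier S i (level S i - 1) p) ⊆ earlier S m (level S m) p := by
    refine Finset.insert_subset (mem_earlier.2 ⟨hnm, by omega, hpn⟩) fun j hj => ?_
    obtain ⟨hji, hlevel, hpj⟩ := mem_earlier.1 hj
    exact mem_earlier.2 ⟨by omega, by omega, hpj⟩
  have card_le := Finset.card_le_card insert_subset
  rw [Finset.card_insert_of_notMem n_notMem] at card_le
  have card_lt := card_earlier_level_lt hpm
  have level_le := hp.2
  omega

-- Otherwise the later of the two sets would have been forced to a higher level.
lemma IsPeak.notMem (hp : IsPeak S i p) (hij : i ≠ j) (hlevel : level S i = level S j) :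
    p ∉ S j := by
  intro hpj
  rcases hij.lt_or_gt with hij | hji
  · exact hp.notMem_of_lt hij hij.le rfl hlevel.symm hp.1 hpj
  · exact hp.notMem_of_lt hji le_rfl hlevel.symm rfl hpj hp.1

/-- Greedy colour of the `i`-th set: the least one that is not used by an earlier set of the same
level meeting it. -/
noncomputable def color (S : ℕ → Set α) (i : ℕ) : ℕ :=
  sInf {c | ∀ j, ∀ _ : j < i, level S j = level S i → (S j ∩ S i).Nonempty → color S j ≠ c}

open Classical in
/-- The indices before `i` of the sets that meet `S i` and have its level. -/
noncomputable def conflicts (S : ℕ → Set α) (i : ℕ) : Finset ℕ :=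
  {j ∈ Finset.range i | level S j = level S i ∧ (S j ∩ S i).Nonempty}

lemma mem_conflicts :
    j ∈ conflicts S i ↔ j < i ∧ level S j = level S i ∧ (S j ∩ S i).Nonempty := by
  simp [conflicts]

lemma color_eq_sInf (S : ℕ → Set α) (i : ℕ) :
    color S i = sInf {c | c ∉ (conflicts S i).image (color S)} := by
  rw [color]
  congr 1
  ext c
  simp [mem_conflicts]

lemma color_notMem_image_conflicts (S : ℕ → Set α) (i : ℕ) :
    color S i ∉ (conflicts S i).image (color S) := by
  rw [color_eq_sInf S i]
  exact Nat.sInf_mem (s := {c | c ∉ (conflicts S i).image (color S)})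
    (Infinite.exists_notMem_finset _)

lemma color_le_card_conflicts (S : ℕ → Set α) (i : ℕ) : color S i ≤ (conflicts S i).card := by
  have range_subset : Finset.range (color S i) ⊆ (conflicts S i).image (color S) := fun c hc => by
    rw [Finset.mem_range, color_eq_sInf] at hc
    simpa using Nat.notMem_of_lt_sInf hc
  simpa using (Finset.card_le_card range_subset).trans Finset.card_image_le

lemma disjoint_of_level_eq_of_color_eq (hij : i ≠ j) (hlevel : level S i = level S j)
    (hcolor : color S i = color S j) : Disjoint (S i) (S j) := by
  wlog hlt : i < j generalizing i j
  · exact (this hij.symm hlevel.symm hcolor.symm (by omega)).symm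
  by_contra hmeet
  rw [Set.not_disjoint_iff_nonempty_inter] at hmeet
  exact color_notMem_image_conflicts S j
    (Finset.mem_image.2 ⟨i, mem_conflicts.2 ⟨hlt, hlevel, hmeet⟩, hcolor⟩)

lemma isCausal_level : IsCausal (level (α := α)) := by
  intro S T i h
  induction i using Nat.strong_induction_on with
  | _ i ih =>
    have earlier_eq (k : ℕ) (p : α) : earlier S i k p = earlier T i k p := by
      ext j
      simp only [mem_earlier]
      refine and_congr_right fun hj => ?_
      rw [ih j hj fun m hm => h m (hm.trans hj.le), h j hj.le]
    simp only [level_eq_sInf _ i, earlier_eq, h i le_rfl]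

lemma isCausal_color : IsCausal (color (α := α)) := by
  intro S T i h
  induction i using Nat.strong_induction_on with
  | _ i ih =>
    have h_of_lt {j : ℕ} (hj : j < i) : ∀ m ≤ j, S m = T m := fun m hm => h m (hm.trans hj.le)
    have conflicts_eq : conflicts S i = conflicts T i := by
      ext j
      simp only [mem_conflicts]
      refine and_congr_right fun hj => ?_
      rw [isCausal_level h, isCausal_level (h_of_lt hj), h j hj.le, h i le_rfl]
    have image_eq : (conflicts S i).image (color S) = (conflicts T i).image (color T) := by
      rw [conflicts_eq]
      exact Finset.image_congr fun j hj =>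
        ih j (mem_conflicts.1 hj).1 (h_of_lt (mem_conflicts.1 hj).1)
    rw [color_eq_sInf, color_eq_sInf, image_eq]

/-- Colour that the algorithm of Kierstead and Trotter gives to the `i`-th interval: every level has
its own three colours. Empty intervals, at level `0`, share the colours of level `1` by truncated
subtraction. -/
noncomputable def levelColor (S : ℕ → Set α) (i : ℕ) : ℕ := 3 * (level S i - 1) + color S i

lemma isCausal_levelColor : IsCausal (levelColor (α := α)) := fun S T i h => by
  rw [levelColor, levelColor, isCausal_level h, isCausal_color h]

end Level

section LinearOrder

variable {α : Type*} [LinearOrder α]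

lemma not_lt_of_private_points {I J K : Set α} (hI : I.OrdConnected) (hJ : J.OrdConnected)
    (hK : K.OrdConnected) {x y z : α} (hx : x ∈ I) (hy : y ∈ J) (hz : z ∈ K)
    (hyI : y ∉ I) (hzI : z ∉ I) (hyK : y ∉ K) (hzJ : z ∉ J)
    (hJI : (J ∩ I).Nonempty) (hKI : (K ∩ I).Nonempty) (hyx : y < x) : ¬ z < x := by
  intro hzx
  obtain ⟨a, haJ, haI⟩ := hJI
  obtain ⟨b, hbK, hbI⟩ := hKI
  have hza : z < a := lt_of_not_ge fun haz => hzI (hI.out haI hx ⟨haz, hzx.le⟩)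
  have hyb : y < b := lt_of_not_ge fun hby => hyI (hI.out hbI hx ⟨hby, hyx.le⟩)
  rcases le_total y z with hyz | hzy
  · exact hzJ (hJ.out hy haJ ⟨hyz, hza.le⟩)
  · exact hyK (hK.out hz hbK ⟨hzy, hyb.le⟩)

-- At most one of the neighbours has its private point on each side of the private point of `I i`.
lemma card_le_two_of_private_points {ι : Type*} {I : ι → Set α} {x : ι → α} {i : ι} {F : Finset ι}
    (hI : ∀ j, (I j).OrdConnected) (hiF : i ∉ F)
    (hmem : ∀ j ∈ insert i (F : Set ι), x j ∈ I j)
    (hnotMem : (insert i (F : Set ι)).Pairwise fun j k => x j ∉ I k)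
    (hmeet : ∀ j ∈ F, (I j ∩ I i).Nonempty) : F.card ≤ 2 := by
  have mem_insert {j : ι} (hj : j ∈ F) : j ∈ insert i (F : Set ι) := Or.inr hj
  have i_mem : i ∈ insert i (F : Set ι) := Or.inl rfl
  have x_notMem {j : ι} (hj : j ∈ F) : x j ∉ I i :=
    hnotMem (mem_insert hj) i_mem (ne_of_mem_of_not_mem hj hiF)
  have x_ne {j : ι} (hj : j ∈ F) : x j ≠ x i := fun h => x_notMem hj (h ▸ hmem i i_mem)
  have side_injOn : Set.InjOn (fun j => decide (x j < x i)) F := by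
    intro j hj k hk hside
    by_contra hjk
    have hjk' := hnotMem (mem_insert hj) (mem_insert hk) hjk
    have hkj' := hnotMem (mem_insert hk) (mem_insert hj) (Ne.symm hjk)
    have hside : x j < x i ↔ x k < x i := decide_eq_decide.1 hside
    rcases (x_ne hj).lt_or_gt with hlt | hgt
    · exact not_lt_of_private_points (hI i) (hI j) (hI k) (hmem i i_mem) (hmem j (mem_insert hj))
        (hmem k (mem_insert hk)) (x_notMem hj) (x_notMem hk) hjk' hkj' (hmeet j hj) (hmeet k hk)
        hlt (hside.1 hlt)
    · have hgt' : x i < x k := (x_ne hk).symm.lt_of_le (not_lt.1 (hside.not.1 hgt.not_gt))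
      exact not_lt_of_private_points (α := αᵒᵈ) (hI i).dual (hI j).dual (hI k).dual (hmem i i_mem)
        (hmem j (mem_insert hj)) (hmem k (mem_insert hk)) (x_notMem hj) (x_notMem hk) hjk' hkj'
        (hmeet j hj) (hmeet k hk) hgt hgt'
  simpa using Finset.card_le_card_of_injOn _ (fun _ _ => Finset.mem_univ _) side_injOn

variable {S : ℕ → Set α} {i j : ℕ}

lemma card_conflicts_le_two (hS : ∀ j, (S j).OrdConnected) (i : ℕ) :
    (conflicts S i).card ≤ 2 := by
  rcases (conflicts S i).eq_empty_or_nonempty with hempty | ⟨m, hm⟩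
  · simp [hempty]
  have spec : ∀ j ∈ insert i (conflicts S i : Set ℕ),
      level S j = level S i ∧ (S j).Nonempty := by
    rintro j (rfl | hj)
    · exact ⟨rfl, (mem_conflicts.1 hm).2.2.mono Set.inter_subset_right⟩
    · obtain ⟨-, hlevel, hmeet⟩ := mem_conflicts.1 hj
      exact ⟨hlevel, hmeet.mono Set.inter_subset_left⟩
  have : Nonempty α := ⟨(mem_conflicts.1 hm).2.2.some⟩
  choose! x hx using fun j hj => exists_isPeak (spec j hj).2
  exact card_le_two_of_private_points hS (by simp [mem_conflicts]) (fun j hj => (hx j hj).1)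
    (fun j hj k hk hjk => (hx j hj).notMem hjk ((spec j hj).1.trans (spec k hk).1.symm))
    (fun j hj => (mem_conflicts.1 hj).2.2)

lemma color_lt_three (hS : ∀ j, (S j).OrdConnected) (i : ℕ) : color S i < 3 :=
  Nat.lt_succ_of_le ((color_le_card_conflicts S i).trans (card_conflicts_le_two hS i))

lemma disjoint_of_levelColor_eq (hS : ∀ j, (S j).OrdConnected) (hij : i ≠ j)
    (h : levelColor S i = levelColor S j) : Disjoint (S i) (S j) := by
  rcases (S i).eq_empty_or_nonempty with hi | hi
  · simp [hi]
  rcases (S j).eq_empty_or_nonempty with hj | hj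
  · simp [hj]
  have := color_lt_three hS i
  have := color_lt_three hS j
  have := level_pos hi
  have := level_pos hj
  unfold levelColor at h
  exact disjoint_of_level_eq_of_color_eq hij (by omega) (by omega)

open Classical in
lemma levelColor_lt (hS : ∀ j, (S j).OrdConnected) {n M : ℕ} (hM₀ : 0 < M)
    (hM : ∀ p, {j ∈ Finset.range n | p ∈ S j}.card ≤ M) (hi : i < n) :
    levelColor S i < 3 * M := by
  have := color_lt_three hS i
  have := level_le hM hi
  unfold levelColor
  omega

end LinearOrder

end IntervalColoring

/-! ### Online scheduling of jobs with start deadlines -/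

/-- A job of length `width`, to be started at a time in `[0, deadline]`. -/
structure Job where
  deadline : ℝ
  width : ℝ

/-- Deadline and width of a job are nonnegative. -/
structure Job.IsNonneg (J : Job) : Prop where
  deadline_nonneg : 0 ≤ J.deadline
  width_nonneg : 0 ≤ J.width

/-- The open time interval during which a job started at time `t` runs. -/
def Job.run (J : Job) (t : ℝ) : Set ℝ := Set.Ioo t (t + J.width)

/-- A schedule of a family of jobs on machines: every job starts in time, and no two jobs run on the
same machine simultaneously. Jobs of width `0` may start at any time up to their deadline. -/
structure IsSchedule {ι : Type*} (J : ι → Job) (machine : ι → ℕ) (start : ι → ℝ) : Prop where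
  start_mem : ∀ i, start i ∈ Set.Icc 0 (J i).deadline
  disjoint_run : ∀ i j, i ≠ j → machine i = machine j →
    Disjoint ((J i).run (start i)) ((J j).run (start j))

lemma Job.disjoint_run_of_le {J K : Job} {s t : ℝ} (h : s + J.width ≤ t) :
    Disjoint (J.run s) (K.run t) :=
  Set.Ioo_disjoint_Ioo.2 (min_le_of_left_le (le_max_of_le_right h))

section Capacity

variable {ι : Type*}

lemma sum_sub_le_of_pairwiseDisjoint_Ioo {F : Finset ι} {a b : ι → ℝ} {A B : ℝ} (hAB : A ≤ B)
    (hab : ∀ i ∈ F, a i ≤ b i) (hA : ∀ i ∈ F, A ≤ a i) (hB : ∀ i ∈ F, b i ≤ B)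
    (hdisj : (F : Set ι).PairwiseDisjoint fun i => Set.Ioo (a i) (b i)) :
    ∑ i ∈ F, (b i - a i) ≤ B - A :=
  calc ∑ i ∈ F, (b i - a i) = ∑ i ∈ F, MeasureTheory.volume.real (Set.Ioo (a i) (b i)) :=
        Finset.sum_congr rfl fun i hi => (Real.volume_real_Ioo_of_le (hab i hi)).symm
    _ = MeasureTheory.volume.real (⋃ i ∈ F, Set.Ioo (a i) (b i)) :=
        (MeasureTheory.measureReal_biUnion_finset hdisj (fun _ _ => measurableSet_Ioo)
          (fun _ _ => measure_Ioo_lt_top.ne)).symm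
    _ ≤ MeasureTheory.volume.real (Set.Icc A B) :=
        MeasureTheory.measureReal_mono (Set.iUnion₂_subset fun i hi =>
          Set.Ioo_subset_Icc_self.trans (Set.Icc_subset_Icc (hA i hi) (hB i hi))) (by simp)
    _ = B - A := Real.volume_real_Icc_of_le hAB

variable {J : ι → Job} {machine : ι → ℕ} {start : ι → ℝ} {F : Finset ι} {c m : ℕ}

-- The jobs are cut down to widths `u i`, which may be smaller than their own.
lemma IsSchedule.sum_le_of_machine_eq (h : IsSchedule J machine start) {u : ι → ℝ} {B : ℝ}
    (hB₀ : 0 ≤ B) (hu₀ : ∀ i ∈ F, 0 ≤ u i) (hu : ∀ i ∈ F, u i ≤ (J i).width)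
    (hB : ∀ i ∈ F, (J i).deadline + u i ≤ B) (hF : ∀ i ∈ F, machine i = c) :
    ∑ i ∈ F, u i ≤ B := by
  have run_subset {i : ι} (hi : i ∈ F) :
      Set.Ioo (start i) (start i + u i) ⊆ (J i).run (start i) :=
    Set.Ioo_subset_Ioo_right (by linarith [hu i hi])
  have sum_le := sum_sub_le_of_pairwiseDisjoint_Ioo (F := F) (a := start)
    (b := fun i => start i + u i) hB₀ (fun i hi => by linarith [hu₀ i hi])
    (fun i _ => (h.start_mem i).1) (fun i hi => by linarith [(h.start_mem i).2, hB i hi])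
    (fun i hi j hj hij => (h.disjoint_run i j hij ((hF i hi).trans (hF j hj).symm)).mono
      (run_subset hi) (run_subset hj))
  simpa using sum_le

lemma IsSchedule.sum_width_le (h : IsSchedule J machine start) {B : ℝ}
    (hm : ∀ i, machine i < m) (hw : ∀ i ∈ F, 0 ≤ (J i).width) (hB₀ : 0 ≤ B)
    (hB : ∀ i ∈ F, (J i).deadline + (J i).width ≤ B) : ∑ i ∈ F, (J i).width ≤ m * B := by
  have sum_fiber_le : ∀ c ∈ Finset.range m, ∑ i ∈ F with machine i = c, (J i).width ≤ B :=
    fun c _ => h.sum_le_of_machine_eq hB₀ (fun i hi => hw i (Finset.mem_filter.1 hi).1)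
      (fun _ _ => le_rfl) (fun i hi => hB i (Finset.mem_filter.1 hi).1)
      fun i hi => (Finset.mem_filter.1 hi).2
  calc ∑ i ∈ F, (J i).width = ∑ c ∈ Finset.range m, ∑ i ∈ F with machine i = c, (J i).width :=
        (Finset.sum_fiberwise_of_maps_to (fun i _ => Finset.mem_range.2 (hm i)) _).symm
    _ ≤ ∑ _c ∈ Finset.range m, B := Finset.sum_le_sum sum_fiber_le
    _ = m * B := by simp

end Capacity

namespace Job

/-- Long jobs have width at least a quarter of their deadline; the other jobs are short. -/
def IsLong (J : Job) : Prop := J.deadline ≤ 4 * J.width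

/-- The time interval `[deadline, deadline + width)` during which a long job started at its deadline
runs; empty for short jobs. -/
def latestRun (J : Job) : Set ℝ := {p ∈ Set.Ico J.deadline (J.deadline + J.width) | J.IsLong}

lemma ordConnected_latestRun (J : Job) : J.latestRun.OrdConnected :=
  ⟨fun _ hx _ hy _ hz => ⟨⟨hx.1.1.trans hz.1, hz.2.trans_lt hy.1.2⟩, hx.2⟩⟩

lemma IsLong.run_deadline_subset {J : Job} (hJ : J.IsLong) : J.run J.deadline ⊆ J.latestRun :=
  fun _ hp => ⟨⟨hp.1.le, hp.2⟩, hJ⟩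

lemma width_pos_of_mem_latestRun {J : Job} {p : ℝ} (hp : p ∈ J.latestRun) : 0 < J.width := by
  linarith [hp.1.1, hp.1.2]

lemma lt_of_mem_latestRun {J : Job} {p : ℝ} (hp : p ∈ J.latestRun) : p < 5 * J.width := by
  linarith [hp.1.2, show J.deadline ≤ 4 * J.width from hp.2]

/-- The largest power of two that is at most the deadline, for a positive deadline. -/
noncomputable def scale (J : Job) : ℝ := 2 ^ Int.log 2 J.deadline

lemma scale_pos (J : Job) : 0 < J.scale := by
  unfold scale
  positivity

lemma scale_le_deadline {J : Job} (h : 0 < J.deadline) : J.scale ≤ J.deadline := by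
  exact_mod_cast Int.zpow_log_le_self one_lt_two h

lemma deadline_lt_two_mul_scale (J : Job) : J.deadline < 2 * J.scale := by
  have := Int.lt_zpow_succ_log_self one_lt_two J.deadline
  rw [zpow_add_one₀ (by norm_num)] at this
  push_cast at this
  rwa [scale, mul_comm]

lemma two_mul_scale_le_of_lt {J K : Job} (h : J.scale < K.scale) : 2 * J.scale ≤ K.scale := by
  have log_lt := (zpow_lt_zpow_iff_right₀ (one_lt_two (α := ℝ))).1 h
  calc 2 * J.scale = 2 ^ (Int.log 2 J.deadline + 1) := by
        rw [scale, zpow_add_one₀ two_ne_zero, mul_comm]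
    _ ≤ K.scale := zpow_le_zpow_right₀ one_le_two log_lt

variable {J : Job}

lemma width_lt_of_not_isLong (h : ¬ J.IsLong) : J.width < J.scale / 2 := by
  linarith [not_le.1 h, J.deadline_lt_two_mul_scale]

lemma IsNonneg.deadline_pos_of_not_isLong (hJ : J.IsNonneg) (h : ¬ J.IsLong) : 0 < J.deadline := by
  linarith [not_le.1 h, hJ.width_nonneg]

end Job

-- Their least width `u` exceeds `p / 5`, and all of them start in `[0, p]`.
lemma IsSchedule.card_le_five_of_mem_latestRun {ι : Type*} {J : ι → Job} {machine : ι → ℕ}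
    {start : ι → ℝ} {F : Finset ι} {c : ℕ} {p : ℝ} (h : IsSchedule J machine start)
    (hJ : ∀ i ∈ F, (J i).IsNonneg) (hp : ∀ i ∈ F, p ∈ (J i).latestRun)
    (hF : ∀ i ∈ F, machine i = c) : F.card ≤ 5 := by
  rcases F.eq_empty_or_nonempty with rfl | hne
  · simp
  obtain ⟨k, hk, width_le⟩ := F.exists_min_image (fun i => (J i).width) hne
  set u := (J k).width
  have u_pos : 0 < u := Job.width_pos_of_mem_latestRun (hp k hk)
  have p_lt : p < 5 * u := Job.lt_of_mem_latestRun (hp k hk)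
  have p_nonneg : 0 ≤ p := (hJ k hk).deadline_nonneg.trans (hp k hk).1.1
  have sum_le : ∑ _i ∈ F, u ≤ p + u := h.sum_le_of_machine_eq (by positivity)
    (fun _ _ => u_pos.le) width_le (fun i hi => by linarith [(hp i hi).1.1]) hF
  have card_lt : (F.card : ℝ) < 6 := by
    rw [Finset.sum_const, nsmul_eq_mul] at sum_le
    exact lt_of_mul_lt_mul_right (by linarith) u_pos.le
  exact Nat.lt_succ_iff.1 (by exact_mod_cast card_lt)

namespace OnlineSchedule

open IntervalColoring

variable {X : ℕ → Job} {i j : ℕ} {r : ℝ}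

open Classical in
/-- Total width of the short jobs of scale `r` among the first `i` jobs. -/
noncomputable def shortLoad (X : ℕ → Job) (r : ℝ) (i : ℕ) : ℝ :=
  ∑ j ∈ Finset.range i with ¬ (X j).IsLong ∧ (X j).scale = r, (X j).width

/-- Position, in units of a quarter of the scale `r`, at which a short job starts when all short
jobs of scale `r` are laid out consecutively on a half-line. -/
noncomputable def position (X : ℕ → Job) (i : ℕ) : ℝ :=
  shortLoad X (X i).scale i / ((X i).scale / 4)

open Classical in
/-- Machine of the `i`-th job. Long jobs go to the odd machines, short jobs to the even ones. -/
noncomputable def machine (X : ℕ → Job) (i : ℕ) : ℕ :=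
  if (X i).IsLong then 2 * levelColor (fun j => (X j).latestRun) i + 1
  else 2 * ⌊position X i⌋₊

open Classical in
/-- Starting time of the `i`-th job. Short jobs of scale `r` start in `[3/4 * r, r)`. -/
noncomputable def start (X : ℕ → Job) (i : ℕ) : ℝ :=
  if (X i).IsLong then (X i).deadline
  else (X i).scale / 4 * (3 + (position X i - ⌊position X i⌋₊))

lemma isCausal_shortLoad (r : ℝ) : IsCausal fun X => shortLoad X r := fun X Y i h => by
  simp only [shortLoad, Finset.sum_filter]
  exact Finset.sum_congr rfl fun j hj => by rw [h j (Finset.mem_range.1 hj).le]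

lemma isCausal_position : IsCausal position := fun X Y i h => by
  simp only [position, h i le_rfl, isCausal_shortLoad _ h]

lemma isCausal_machine : IsCausal machine := fun X Y i h => by
  have latestRun_eq : ∀ j ≤ i, (X j).latestRun = (Y j).latestRun := fun j hj => by rw [h j hj]
  rw [machine, machine, isCausal_levelColor latestRun_eq, isCausal_position h, h i le_rfl]

lemma isCausal_start : IsCausal start := fun X Y i h => by
  rw [start, start, isCausal_position h, h i le_rfl]

lemma shortLoad_nonneg (hX : ∀ i, (X i).IsNonneg) : 0 ≤ shortLoad X r i :=
  Finset.sum_nonneg fun j _ => (hX j).width_nonneg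

lemma shortLoad_mono (hX : ∀ i, (X i).IsNonneg) : Monotone (shortLoad X r) := fun _ _ hij => by
  classical
  exact Finset.sum_le_sum_of_subset_of_nonneg
    (Finset.filter_subset_filter _ (Finset.range_mono hij)) fun j _ _ => (hX j).width_nonneg

lemma shortLoad_succ (hi : ¬ (X i).IsLong) :
    shortLoad X (X i).scale (i + 1) = shortLoad X (X i).scale i + (X i).width := by
  simp [shortLoad, Finset.sum_filter, Finset.sum_range_succ, hi]

lemma position_nonneg (hX : ∀ i, (X i).IsNonneg) : 0 ≤ position X i :=
  div_nonneg (shortLoad_nonneg hX) (by linarith [(X i).scale_pos])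

lemma position_add_le (hX : ∀ i, (X i).IsNonneg) (hij : i < j) (hi : ¬ (X i).IsLong)
    (hscale : (X i).scale = (X j).scale) :
    position X i + (X i).width / ((X i).scale / 4) ≤ position X j := by
  have load_le := shortLoad_mono (r := (X i).scale) hX hij
  rw [Nat.succ_eq_add_one, shortLoad_succ hi] at load_le
  have scale_pos := (X i).scale_pos
  rw [position, position, ← hscale, ← add_div]
  gcongr

lemma start_of_isLong (hi : (X i).IsLong) : start X i = (X i).deadline := if_pos hi

lemma start_of_not_isLong (hi : ¬ (X i).IsLong) :
    start X i = (X i).scale / 4 * (3 + (position X i - ⌊position X i⌋₊)) := if_neg hi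

lemma start_mem_Ico_of_not_isLong (hX : ∀ i, (X i).IsNonneg) (hi : ¬ (X i).IsLong) :
    start X i ∈ Set.Ico (3 / 4 * (X i).scale) (X i).scale := by
  have floor_le := Nat.floor_le (position_nonneg hX (i := i))
  have lt_floor := Nat.lt_floor_add_one (position X i)
  have scale_pos := (X i).scale_pos
  rw [start_of_not_isLong hi]
  constructor <;> nlinarith

lemma start_mem_Icc (hX : ∀ i, (X i).IsNonneg) (i : ℕ) :
    start X i ∈ Set.Icc 0 (X i).deadline := by
  by_cases hi : (X i).IsLong
  · exact ⟨start_of_isLong hi ▸ (hX i).deadline_nonneg, (start_of_isLong hi).le⟩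
  · obtain ⟨le_start, start_lt⟩ := start_mem_Ico_of_not_isLong hX hi
    have scale_le := Job.scale_le_deadline ((hX i).deadline_pos_of_not_isLong hi)
    exact ⟨by linarith [(X i).scale_pos], start_lt.le.trans scale_le⟩

lemma disjoint_run_of_isLong (hij : i ≠ j) (hi : (X i).IsLong) (hj : (X j).IsLong)
    (hmachine : machine X i = machine X j) :
    Disjoint ((X i).run (start X i)) ((X j).run (start X j)) := by
  rw [machine, machine, if_pos hi, if_pos hj] at hmachine
  rw [start_of_isLong hi, start_of_isLong hj]
  exact (disjoint_of_levelColor_eq (fun j => (X j).ordConnected_latestRun) hij (by omega)).mono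
    hi.run_deadline_subset hj.run_deadline_subset

-- The range `[3/4 * r, 3/2 * r)` used by the jobs of scale `r` ends where that of `2 * r` begins.
lemma disjoint_run_of_scale_lt (hX : ∀ i, (X i).IsNonneg) (hi : ¬ (X i).IsLong)
    (hj : ¬ (X j).IsLong) (hscale : (X i).scale < (X j).scale) :
    Disjoint ((X i).run (start X i)) ((X j).run (start X j)) := by
  apply Job.disjoint_run_of_le
  linarith [(start_mem_Ico_of_not_isLong hX hi).2, (start_mem_Ico_of_not_isLong hX hj).1,
    Job.width_lt_of_not_isLong hi, Job.two_mul_scale_le_of_lt hscale]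

lemma disjoint_run_of_scale_eq (hX : ∀ i, (X i).IsNonneg) (hij : i < j) (hi : ¬ (X i).IsLong)
    (hj : ¬ (X j).IsLong) (hscale : (X i).scale = (X j).scale)
    (hmachine : machine X i = machine X j) :
    Disjoint ((X i).run (start X i)) ((X j).run (start X j)) := by
  have floor_eq : ⌊position X i⌋₊ = ⌊position X j⌋₊ := by
    rw [machine, machine, if_neg hi, if_neg hj] at hmachine
    omega
  have scale_pos := (X i).scale_pos
  apply Job.disjoint_run_of_le
  rw [start_of_not_isLong hi, start_of_not_isLong hj, ← hscale, ← floor_eq]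
  calc (X i).scale / 4 * (3 + (position X i - ⌊position X i⌋₊)) + (X i).width
      = (X i).scale / 4 *
          (3 + (position X i + (X i).width / ((X i).scale / 4) - ⌊position X i⌋₊)) := by
        field_simp
        ring
    _ ≤ (X i).scale / 4 * (3 + (position X j - ⌊position X i⌋₊)) := by
        gcongr
        exact position_add_le hX hij hi hscale

theorem isSchedule (hX : ∀ i, (X i).IsNonneg) : IsSchedule X (machine X) (start X) where
  start_mem := start_mem_Icc hX
  disjoint_run i j hij hmachine := by
    wlog hlt : i < j generalizing i j
    · exact (this j i hij.symm hmachine.symm (by omega)).symm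
    by_cases hi : (X i).IsLong <;> by_cases hj : (X j).IsLong
    · exact disjoint_run_of_isLong hij hi hj hmachine
    · rw [machine, machine, if_pos hi, if_neg hj] at hmachine
      omega
    · rw [machine, machine, if_neg hi, if_pos hj] at hmachine
      omega
    · rcases lt_trichotomy (X i).scale (X j).scale with hscale | hscale | hscale
      · exact disjoint_run_of_scale_lt hX hi hj hscale
      · exact disjoint_run_of_scale_eq hX hlt hi hj hscale hmachine
      · exact (disjoint_run_of_scale_lt hX hj hi hscale).symm

section Competitive

variable {n m : ℕ} {b : Fin n → ℕ} {s : Fin n → ℝ}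

-- In an arbitrary schedule, jobs of scale `r` start before `2 * r` and have width below `r / 2`.
lemma shortLoad_le (hX : ∀ i, (X i).IsNonneg) (h : IsSchedule (fun i : Fin n => X i) b s)
    (hb : ∀ i, b i < m) (hr : 0 ≤ r) : shortLoad X r n ≤ m * (5 / 2 * r) := by
  classical
  have load_eq : shortLoad X r n =
      ∑ i ∈ Finset.univ.filter (fun i : Fin n => ¬ (X i).IsLong ∧ (X i).scale = r),
        (X i).width := by
    rw [shortLoad, Finset.sum_filter, Finset.sum_filter, Finset.sum_range]
  rw [load_eq]
  refine h.sum_width_le hb (fun i _ => (hX i).width_nonneg) (by positivity) fun i hi => ?_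
  obtain ⟨-, hshort, rfl⟩ := Finset.mem_filter.1 hi
  linarith [(X i).deadline_lt_two_mul_scale, Job.width_lt_of_not_isLong hshort]

open Classical in
lemma card_mem_latestRun_le (hX : ∀ i, (X i).IsNonneg)
    (h : IsSchedule (fun i : Fin n => X i) b s) (hb : ∀ i, b i < m) (p : ℝ) :
    {j ∈ Finset.range n | p ∈ (X j).latestRun}.card ≤ 5 * m := by
  have card_eq : {j ∈ Finset.range n | p ∈ (X j).latestRun}.card =
      (Finset.univ.filter fun j : Fin n => p ∈ (X j).latestRun).card := by
    rw [Finset.card_filter, Finset.card_filter, Finset.sum_range]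
  rw [card_eq, ← Finset.card_range m]
  refine Finset.card_le_mul_card_image_of_maps_to (fun i _ => Finset.mem_range.2 (hb i)) 5
    fun c _ => h.card_le_five_of_mem_latestRun (c := c) (p := p) (fun i _ => hX i) ?_ ?_ <;>
      simp +contextual

lemma floor_position_le (hX : ∀ i, (X i).IsNonneg) (h : IsSchedule (fun i : Fin n => X i) b s)
    (hb : ∀ i, b i < m) (hi : i < n) : ⌊position X i⌋₊ ≤ 10 * m := by
  have scale_pos := (X i).scale_pos
  apply Nat.floor_le_of_le
  rw [position, div_le_iff₀ (by positivity)]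
  calc shortLoad X (X i).scale i ≤ shortLoad X (X i).scale n := shortLoad_mono hX hi.le
    _ ≤ m * (5 / 2 * (X i).scale) := shortLoad_le hX h hb scale_pos.le
    _ = (10 * m : ℕ) * ((X i).scale / 4) := by
        push_cast
        ring

lemma levelColor_latestRun_lt (hX : ∀ i, (X i).IsNonneg)
    (h : IsSchedule (fun i : Fin n => X i) b s) (hb : ∀ i, b i < m) (hi : i < n) :
    levelColor (fun j => (X j).latestRun) i < 15 * m := by
  have m_pos : 0 < m := (Nat.zero_le _).trans_lt (hb ⟨i, hi⟩)
  have := levelColor_lt (fun j => (X j).ordConnected_latestRun) (by positivity)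
    (card_mem_latestRun_le hX h hb) hi
  omega

theorem card_image_machine_le (hX : ∀ i, (X i).IsNonneg)
    (h : IsSchedule (fun i : Fin n => X i) b s) (hb : ∀ i, b i < m) :
    (Finset.univ.image fun i : Fin n => machine X i).card ≤ 25 * m + 1 := by
  have image_subset : (Finset.univ.image fun i : Fin n => machine X i) ⊆
      (Finset.range (15 * m)).image (2 * · + 1) ∪ (Finset.range (10 * m + 1)).image (2 * ·) := by
    refine Finset.image_subset_iff.2 fun i _ => ?_
    by_cases hi : (X i).IsLong
    · rw [machine, if_pos hi]
      exact Finset.mem_union_left _ (Finset.mem_image_of_mem _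
        (Finset.mem_range.2 (levelColor_latestRun_lt hX h hb i.2)))
    · rw [machine, if_neg hi]
      exact Finset.mem_union_right _ (Finset.mem_image_of_mem _
        (Finset.mem_range_succ_iff.2 (floor_position_le hX h hb i.2)))
  calc (Finset.univ.image fun i : Fin n => machine X i).card
      ≤ (Finset.range (15 * m)).card + (Finset.range (10 * m + 1)).card :=
        (Finset.card_le_card image_subset).trans ((Finset.card_union_le _ _).trans
          (add_le_add Finset.card_image_le Finset.card_image_le))
    _ = 25 * m + 1 := by
        rw [Finset.card_range, Finset.card_range]
        omega

end Competitive

end OnlineSchedule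

/-! ### L-shapes as jobs -/

lemma mem_planeTranslate {v q : ℝ × ℝ} {A : Set (ℝ × ℝ)} :
    q ∈ planeTranslate v A ↔ q - v ∈ A := by
  simp [planeTranslate, sub_eq_add_neg]

namespace LShape

variable {L M : LShape} {v v' : ℝ × ℝ} {s t : ℝ}

lemma mem_toSet {q : ℝ × ℝ} : q ∈ L.toSet ↔
    0 ≤ q.1 ∧ 0 ≤ q.2 ∧ (q.1 ≤ L.lx ∧ q.2 ≤ L.wy ∨ q.1 ≤ L.wx ∧ q.2 ≤ L.ly) := by
  simp only [toSet, Set.mem_union, Set.mem_Icc, Prod.le_def]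
  tauto

lemma IsValid.planeTranslate_subset_unitBin_iff (hL : L.IsValid) :
    planeTranslate v L.toSet ⊆ unitBin ↔
      v.1 ∈ Set.Icc 0 (1 - L.lx) ∧ v.2 ∈ Set.Icc 0 (1 - L.ly) := by
  obtain ⟨wx_nonneg, wx_le, -, wy_nonneg, wy_le, -⟩ := hL
  constructor
  · intro h
    have right_tip : v + (L.lx, 0) ∈ unitBin := h (mem_planeTranslate.2 (mem_toSet.2 (by
      simp [wy_nonneg, wx_nonneg.trans wx_le])))
    have upper_tip : v + (0, L.ly) ∈ unitBin := h (mem_planeTranslate.2 (mem_toSet.2 (by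
      simp [wx_nonneg, wy_nonneg.trans wy_le])))
    simp only [unitBin, Set.mem_Icc, Prod.le_def, Prod.fst_add, Prod.snd_add] at right_tip upper_tip
    constructor <;> constructor <;> linarith
  · rintro ⟨⟨h₁, h₂⟩, h₃, h₄⟩ q hq
    simp only [mem_planeTranslate, mem_toSet, Prod.fst_sub, Prod.snd_sub] at hq
    simp only [unitBin, Set.mem_Icc, Prod.le_def]
    obtain ⟨hx, hy, h | h⟩ := hq <;> refine ⟨⟨?_, ?_⟩, ?_, ?_⟩ <;> linarith

-- The smaller coordinate lies in `[s, s + L.wx]` on the whole translate; an interior point can be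
-- moved both ways along the diagonal, which makes the inequalities strict.
lemma min_mem_Ioo_of_mem_interior (hw : L.wy ≤ L.wx) {q : ℝ × ℝ}
    (hq : q ∈ interior (planeTranslate (s, s) L.toSet)) :
    min q.1 q.2 ∈ Set.Ioo s (s + L.wx) := by
  have shift_continuous : Continuous fun ε : ℝ => q + (ε, ε) := by fun_prop
  have shift_mem : ∀ᶠ ε in nhds (0 : ℝ), q + (ε, ε) ∈ planeTranslate (s, s) L.toSet :=
    shift_continuous.continuousAt.eventually_mem (by
      rw [Prod.mk_zero_zero, add_zero]
      exact mem_interior_iff_mem_nhds.1 hq)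
  obtain ⟨δ, δ_pos, hδ⟩ := Metric.eventually_nhds_iff.1 shift_mem
  have lower := hδ (y := -(δ / 2)) (by
    rw [dist_zero_right, norm_neg, Real.norm_of_nonneg (by positivity)]; linarith)
  have upper := hδ (y := δ / 2) (by
    rw [dist_zero_right, Real.norm_of_nonneg (by positivity)]; linarith)
  simp only [mem_planeTranslate, mem_toSet, Prod.fst_sub, Prod.snd_sub, Prod.fst_add,
    Prod.snd_add] at lower upper
  refine ⟨lt_min (by linarith [lower.1]) (by linarith [lower.2.1]), min_lt_iff.2 ?_⟩
  obtain ⟨-, -, ⟨-, h⟩ | ⟨h, -⟩⟩ := upper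
  · exact Or.inr (by linarith)
  · exact Or.inl (by linarith)

/-- The job whose possible starting times are the abscissae at which `L` fits into the unit bin, and
which runs over the horizontal extent of the vertical arm of `L`. -/
def job (L : LShape) : Job := ⟨1 - L.lx, L.wx⟩

lemma IsValid.isNonneg_job (hL : L.IsValid) : L.job.IsNonneg :=
  ⟨sub_nonneg.2 hL.2.2.1, hL.1⟩

lemma disjoint_interior_diagonal (hL : L.wy ≤ L.wx) (hM : M.wy ≤ M.wx)
    (h : Disjoint (L.job.run s) (M.job.run t)) :
    Disjoint (interior (planeTranslate (s, s) L.toSet))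
      (interior (planeTranslate (t, t) M.toSet)) :=
  Set.disjoint_left.2 fun _ hq hq' => Set.disjoint_left.1 h
    (min_mem_Ioo_of_mem_interior hL hq) (min_mem_Ioo_of_mem_interior hM hq')

lemma verticalArm_subset_interior (v : ℝ × ℝ) (L : LShape) :
    L.job.run v.1 ×ˢ Set.Ioo v.2 (v.2 + L.ly) ⊆ interior (planeTranslate v L.toSet) := by
  refine interior_maximal ?_ (isOpen_Ioo.prod isOpen_Ioo)
  rintro q ⟨⟨h₁, h₂⟩, h₃, h₄⟩
  simp only [mem_planeTranslate, mem_toSet, Prod.fst_sub, Prod.snd_sub]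
  have fst_lt : q.1 < v.1 + L.wx := h₂
  exact ⟨by linarith, by linarith, Or.inr ⟨by linarith, by linarith⟩⟩

-- Both vertical arms cross the line `y = 1/2`.
lemma disjoint_run_job (hL : L.IsValid) (hM : M.IsValid) (hLy : 1 / 2 < L.ly) (hMy : 1 / 2 < M.ly)
    (hv : planeTranslate v L.toSet ⊆ unitBin) (hv' : planeTranslate v' M.toSet ⊆ unitBin)
    (h : Disjoint (interior (planeTranslate v L.toSet)) (interior (planeTranslate v' M.toSet))) :
    Disjoint (L.job.run v.1) (M.job.run v'.1) := by
  have half_mem {N : LShape} {u : ℝ × ℝ} (hN : N.IsValid) (hNy : 1 / 2 < N.ly)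
      (hu : planeTranslate u N.toSet ⊆ unitBin) : 1 / 2 ∈ Set.Ioo u.2 (u.2 + N.ly) := by
    obtain ⟨-, h₁, h₂⟩ := hN.planeTranslate_subset_unitBin_iff.1 hu
    constructor <;> linarith
  exact Set.disjoint_left.2 fun x hx hx' => Set.disjoint_left.1 h
    (verticalArm_subset_interior v L (Set.mk_mem_prod hx (half_mem hL hLy hv)))
    (verticalArm_subset_interior v' M (Set.mk_mem_prod hx' (half_mem hM hMy hv')))

/-- The L-shapes that the algorithm handles: both arms are longer than `1/2`, the horizontal arm is
at least as long as the vertical one, and the vertical arm is at least as wide as the horizontal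
one. Large symmetric L-shapes are of this kind. -/
structure IsXDominant (L : LShape) : Prop where
  isValid : L.IsValid
  ly_le_lx : L.ly ≤ L.lx
  wy_le_wx : L.wy ≤ L.wx
  half_lt_ly : 1 / 2 < L.ly

end LShape

lemma offPacks_OPT {l : List LShape} (hl : ∀ L ∈ l, L.IsValid) : OffPacks l (OPT l) := by
  refine Nat.sInf_mem (s := {m | OffPacks l m}) ⟨l.length, fun i => i, fun _ => 0, fun i => i.2,
    fun i => ?_, fun i j hij h => absurd (Fin.ext h) hij⟩
  have isValid := hl _ (l.get_mem i)
  have ⟨_, _, lx_le, _, _, ly_le⟩ := isValid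
  rw [isValid.planeTranslate_subset_unitBin_iff]
  exact ⟨⟨le_rfl, sub_nonneg.2 lx_le⟩, le_rfl, sub_nonneg.2 ly_le⟩

lemma exists_isSchedule_OPT {l : List LShape} (hl : ∀ L ∈ l, L.IsXDominant) :
    ∃ b s, IsSchedule (fun i => (l.get i).job) b s ∧ ∀ i, b i < OPT l := by
  obtain ⟨bin, v, bin_lt, subset_unitBin, disjoint_interior⟩ :=
    offPacks_OPT fun L hL => (hl L hL).isValid
  have hget (i : Fin l.length) : (l.get i).IsXDominant := hl _ (l.get_mem i)
  refine ⟨bin, fun i => (v i).1, ⟨fun i => ?_, fun i j hij hbin => ?_⟩, bin_lt⟩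
  · exact ((hget i).isValid.planeTranslate_subset_unitBin_iff.1 (subset_unitBin i)).1
  · exact LShape.disjoint_run_job (hget i).isValid (hget j).isValid (hget i).half_lt_ly
      (hget j).half_lt_ly (subset_unitBin i) (subset_unitBin j) (disjoint_interior i j hij hbin)

/-- The list `l` as an infinite sequence, padded with the L-shape of arm length `1` and width `0`,
which is itself x-dominant. -/
def padded (l : List LShape) (i : ℕ) : LShape := l.getD i ⟨1, 0, 1, 0⟩

lemma padded_eq_get (l : List LShape) (i : Fin l.length) : padded l i = l.get i := by
  simp [padded]

lemma padded_take {l : List LShape} {i j : ℕ} (h : j < i) : padded (l.take i) j = padded l j := by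
  simp [padded, h]

lemma isXDominant_padded {l : List LShape} (hl : ∀ L ∈ l, L.IsXDominant) (i : ℕ) :
    (padded l i).IsXDominant := by
  by_cases hi : i < l.length
  · rw [padded_eq_get l ⟨i, hi⟩]
    exact hl _ (l.get_mem _)
  · rw [padded, List.getD_eq_default _ _ (not_lt.1 hi)]
    constructor <;> norm_num [LShape.IsValid]

/-- The online algorithm that applies the rule `F` to the last item of the list. -/
def onlineAlgorithm (F : (ℕ → LShape) → ℕ → ℕ × ℝ × ℝ) (l : List LShape) : ℕ × ℝ × ℝ :=
  F (padded l) (l.length - 1)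

lemma placeOf_onlineAlgorithm {F : (ℕ → LShape) → ℕ → ℕ × ℝ × ℝ} (hF : IsCausal F)
    (l : List LShape) (i : Fin l.length) :
    placeOf (onlineAlgorithm F) l i = F (padded l) i := by
  have length_take : (l.take (i + 1)).length - 1 = i := by
    rw [List.length_take]
    omega
  rw [placeOf, onlineAlgorithm, length_take]
  exact hF fun j hj => padded_take (Nat.lt_succ_of_le hj)

/-- Put the reference point of each L-shape on the diagonal, at the starting time of its job in the
online schedule, and use the machine of the job as bin index. -/
noncomputable def diagonalRule (X : ℕ → LShape) (i : ℕ) : ℕ × ℝ × ℝ :=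
  (OnlineSchedule.machine (fun j => (X j).job) i, OnlineSchedule.start (fun j => (X j).job) i,
    OnlineSchedule.start (fun j => (X j).job) i)

lemma isCausal_diagonalRule : IsCausal diagonalRule := fun X Y i h => by
  have job_eq : ∀ j ≤ i, (X j).job = (Y j).job := fun j hj => by rw [h j hj]
  rw [diagonalRule, diagonalRule, OnlineSchedule.isCausal_machine job_eq,
    OnlineSchedule.isCausal_start job_eq]

lemma onlinePacks_diagonalRule {l : List LShape} (hl : ∀ L ∈ l, L.IsXDominant) :
    OnlinePacks (onlineAlgorithm diagonalRule) l := by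
  have hpad := isXDominant_padded hl
  have schedule := OnlineSchedule.isSchedule fun i => (hpad i).isValid.isNonneg_job
  unfold OnlinePacks
  simp only [placeOf_onlineAlgorithm isCausal_diagonalRule, ← padded_eq_get]
  refine ⟨fun i => ?_, fun i j hij hbin => ?_⟩
  · obtain ⟨start_nonneg, start_le⟩ := schedule.start_mem i
    exact (hpad i).isValid.planeTranslate_subset_unitBin_iff.2 ⟨⟨start_nonneg, start_le⟩,
      start_nonneg, start_le.trans (sub_le_sub_left (hpad i).ly_le_lx 1)⟩
  · exact LShape.disjoint_interior_diagonal (hpad i).wy_le_wx (hpad j).wy_le_wx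
      (schedule.disjoint_run i j (Fin.val_ne_of_ne hij) hbin)

lemma binsUsed_diagonalRule_le {l : List LShape} (hl : ∀ L ∈ l, L.IsXDominant) :
    binsUsed (onlineAlgorithm diagonalRule) l ≤ 25 * OPT l + 1 := by
  obtain ⟨b, s, schedule, b_lt⟩ := exists_isSchedule_OPT hl
  simp only [← padded_eq_get] at schedule
  simp only [binsUsed, placeOf_onlineAlgorithm isCausal_diagonalRule]
  exact OnlineSchedule.card_image_machine_le (X := fun i => (padded l i).job)
    (fun i => (isXDominant_padded hl i).isValid.isNonneg_job) schedule b_lt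

theorem stmt6_general :
    ∃ A : List LShape → ℕ × ℝ × ℝ,
      ∀ l : List LShape,
        (∀ L ∈ l, L.IsXDominant) → OnlinePacks A l ∧ binsUsed A l ≤ 25 * OPT l + 1 :=
  ⟨onlineAlgorithm diagonalRule, fun _ hl =>
    ⟨onlinePacks_diagonalRule hl, binsUsed_diagonalRule_le hl⟩⟩

/-- there is a deterministic online bin-packing algorithm that, on every input
sequence of symmetric (`ℓx = ℓy`, `wx = wy`) and large (`ℓx = ℓy > 1/2`) L-shapes, produces
a valid packing using at most `33·OPT + 2` bins. -/
theorem stmt6 :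
    ∃ A : List LShape → ℕ × ℝ × ℝ,
      ∀ l : List LShape,
        (∀ L ∈ l, L.IsValid ∧ L.lx = L.ly ∧ L.wx = L.wy ∧ 1 / 2 < L.lx) →
        OnlinePacks A l ∧ binsUsed A l ≤ 33 * OPT l + 2 := by
  obtain ⟨A, hA⟩ := stmt6_general
  refine ⟨A, fun l hl => ?_⟩
  obtain ⟨packs, bins_le⟩ := hA l fun L hL =>
    have ⟨isValid, lx_eq, wx_eq, half_lt⟩ := hl L hL
    ⟨isValid, lx_eq.ge, wx_eq.ge, lx_eq ▸ half_lt⟩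
  exact ⟨packs, by omega⟩
end
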